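/- For every irrational real number d, every compact set K contained in the open strip D := {s ∈ ℂ : 1/2 < Re(s) < 1} with connected complement in ℂ, and every ε > 0, one has liminf_{T→∞} (1/T)·μ{τ ∈ [0,T] : sup_{s∈K} |ζ(s+idτ) − ζ(s+iτ)| < ε} > 0. -/

import Mathlib

/-!
Put `α = d - 1`. The weight `W τ = ∏_{n ≤ N} cos ^ (2 * M) (α log n · τ / 2)` is a trigonometric
polynomial with nonnegative coefficients, frequencies `α log a` with `a` a positive rational, and
mean at least `(1 / (2 * M)) ^ N`. Unless `W τ` is tiny, `n ^ (i(d - 1)τ)` is close to `1` for all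
`n ≤ N`, so that the partial sums `∑_{n ≤ N} n⁻ˢ` at `s + idτ` and `s + iτ` nearly agree.

It remains to bound the mean square of `ζ(s) - ∑_{n ≤ N} n⁻ˢ` along `s + iβτ` with respect to `W`,
for `β = d` and `β = 1`, uniformly in the weight. The terms `n > Y`, with `Y` depending on `W`, are
small by the unweighted mean square on `1/2 < Re s < 1`, as `W ≤ 1`. For `N < n ≤ Y` a pair
`(m, n)` contributes in the limit only if `β log (m / n) = α log a` for some rational `a`, that is,
if `(m / n) ^ c` is rational, where `c = β / α` is irrational. By an interpolation determinant in
the style of the six exponentials theorem, such `m / n` form a group of rank at most `3`, which is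
so sparse that `∑ (m n) ^ (-σ)` over these pairs converges for `σ > 1 / 2`.

Cauchy's formula on small discs turns the mean squares into a bound on `K` outside a set of small
`W`-mass, and since `W ≤ 1`, what is left has positive lower density.
-/

open MeasureTheory Filter Complex
open scoped ENNReal

/-- The open strip `D = {s : 1/2 < Re s < 1}`. -/
def strip : Set ℂ := {s : ℂ | 1/2 < s.re ∧ s.re < 1}

/-- Lower density of a set of real numbers:
`liminf_{T→∞} (1/T)·μ(S ∩ [0,T])`. -/
noncomputable def lowerDens (S : Set ℝ) : ℝ :=
  liminf (fun T : ℝ => (volume (S ∩ Set.Icc 0 T)).toReal / T) atTop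

/-- `sup_{s ∈ K} |f s|`, valued in `ℝ≥0∞`. -/
noncomputable def supNorm (K : Set ℂ) (f : ℂ → ℂ) : ℝ≥0∞ :=
  ⨆ s ∈ K, (‖f s‖₊ : ℝ≥0∞)

/-! ### Exponential determinants -/

lemma encard_zeros_le_encard_deriv_zeros_add_one {f f' : ℝ → ℝ}
    (hf : ∀ x, HasDerivAt f (f' x) x) :
    {x | f x = 0}.encard ≤ {x | f' x = 0}.encard + 1 := by
  by_cases hfin : {x | f' x = 0}.Finite
  · by_contra! hlt
    obtain ⟨t, ht, hcard⟩ := Set.exists_subset_encard_eq (Order.add_one_le_of_lt hlt)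
    have htfin : t.Finite := Set.finite_of_encard_le_coe (k := hfin.toFinset.card + 1 + 1) <| by
      rw [hcard, hfin.encard_eq_coe_toFinset_card]; rfl
    have hle : htfin.toFinset.card ≤ hfin.toFinset.card + 1 := by
      refine Finset.card_le_of_interleaved fun x hx y hy hxy _ => ?_
      have hx0 : f x = 0 := ht (htfin.mem_toFinset.mp hx)
      have hy0 : f y = 0 := ht (htfin.mem_toFinset.mp hy)
      obtain ⟨c, hc, hc0⟩ := exists_hasDerivAt_eq_zero hxy
        (fun z _ => (hf z).continuousAt.continuousWithinAt) (hx0.trans hy0.symm) fun z _ => hf z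
      exact ⟨c, hfin.mem_toFinset.mpr hc0, hc.1, hc.2⟩
    rw [htfin.encard_eq_coe_toFinset_card, hfin.encard_eq_coe_toFinset_card] at hcard
    have : htfin.toFinset.card = hfin.toFinset.card + 1 + 1 := by exact_mod_cast hcard
    omega
  · rw [Set.encard_eq_top (Set.not_finite.mp hfin), top_add]
    exact le_top

lemma hasDerivAt_exp_neg_mul_expSum {ι : Type*} (s : Finset ι) (p w : ι → ℝ) (a z : ℝ) :
    HasDerivAt (fun z => Real.exp (-a * z) * ∑ i ∈ s, p i * Real.exp (w i * z))
      (Real.exp (-a * z) * ∑ i ∈ s, p i * (w i - a) * Real.exp (w i * z)) z := by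
  have hexp (b : ℝ) : HasDerivAt (fun z => Real.exp (b * z)) (Real.exp (b * z) * (b * 1)) z :=
    ((hasDerivAt_id z).const_mul b).exp
  refine ((hexp (-a)).mul
    (HasDerivAt.fun_sum fun i (_ : i ∈ s) => (hexp (w i)).const_mul (p i))).congr_deriv ?_
  rw [Finset.mul_sum, Finset.mul_sum, Finset.mul_sum, ← Finset.sum_add_distrib]
  exact Finset.sum_congr rfl fun i _ => by ring

lemma encard_zeros_expSum_lt {ι : Type*} (s : Finset ι) (p w : ι → ℝ) (hw : Set.InjOn w s)
    (hp : ∃ i ∈ s, p i ≠ 0) :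
    {z : ℝ | ∑ i ∈ s, p i * Real.exp (w i * z) = 0}.encard + 1 ≤ s.card := by
  classical
  induction s using Finset.induction_on generalizing p with
  | empty => simp at hp
  | insert a s ha ih =>
    rw [Finset.card_insert_of_notMem ha, Nat.cast_succ]
    by_cases hps : ∃ i ∈ s, p i ≠ 0
    · have hps' : ∃ i ∈ s, p i * (w i - w a) ≠ 0 := by
        obtain ⟨i, hi, hpi⟩ := hps
        refine ⟨i, hi, mul_ne_zero hpi (sub_ne_zero.mpr fun h => ha ?_)⟩
        rwa [← hw (Finset.mem_insert_of_mem hi) (Finset.mem_insert_self a s) h]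
      have hderiv := encard_zeros_le_encard_deriv_zeros_add_one
        (hasDerivAt_exp_neg_mul_expSum (insert a s) p w (w a))
      simp only [mul_eq_zero, (Real.exp_pos _).ne', false_or,
        Finset.sum_insert ha, sub_self, mul_zero, zero_mul, zero_add] at hderiv
      rw [Finset.coe_insert] at hw
      simp only [Finset.sum_insert ha]
      exact add_le_add_left (hderiv.trans (ih _ (hw.mono (Set.subset_insert _ _)) hps')) 1
    · push Not at hps
      have hpa : p a ≠ 0 := by
        obtain ⟨i, hi, hpi⟩ := hp
        rcases Finset.mem_insert.mp hi with rfl | hi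
        · exact hpi
        · exact absurd (hps i hi) hpi
      have hempty : {z : ℝ | ∑ i ∈ insert a s, p i * Real.exp (w i * z) = 0} = ∅ := by
        refine Set.eq_empty_of_forall_notMem fun z hz => ?_
        rw [Set.mem_ofPred_eq, Finset.sum_insert ha,
          Finset.sum_eq_zero fun i hi => by rw [hps i hi, zero_mul], add_zero] at hz
        exact mul_ne_zero hpa (Real.exp_pos _).ne' hz
      simp [hempty]

lemma det_exp_mul_ne_zero {ι : Type*} [Fintype ι] [DecidableEq ι] {w z : ι → ℝ}
    (hw : w.Injective) (hz : z.Injective) :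
    (Matrix.of fun i j => Real.exp (w i * z j)).det ≠ 0 := by
  intro hdet
  obtain ⟨v, hv, hv0⟩ := Matrix.exists_vecMul_eq_zero_iff.mpr hdet
  have hlt := encard_zeros_expSum_lt Finset.univ v w hw.injOn
    ((Function.ne_iff.mp hv).imp fun i hi => ⟨Finset.mem_univ i, hi⟩)
  have hsub : Set.range z ⊆ {z | ∑ i, v i * Real.exp (w i * z) = 0} := by
    rintro _ ⟨j, rfl⟩
    exact congrFun hv0 j
  have hcard : (Set.range z).encard = Fintype.card ι := by
    rw [← Set.image_univ, hz.encard_image, Set.encard_univ, ENat.card_eq_coe_fintype_card]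
  have : ((Fintype.card ι : ℕ∞) + 1) ≤ Fintype.card ι :=
    (add_le_add_left (hcard ▸ Set.encard_le_encard hsub) 1).trans hlt
  exact absurd (by exact_mod_cast this : Fintype.card ι + 1 ≤ Fintype.card ι) (by omega)

lemma sum_range_card_le_sum (s : Finset ℕ) : ∑ i ∈ Finset.range s.card, i ≤ ∑ i ∈ s, i := by
  induction s using Finset.induction_on_max with
  | empty => simp
  | insert a s hlt ih =>
    have ha : a ∉ s := fun h => (hlt a h).false
    have hcard : s.card ≤ a := by
      simpa using Finset.card_le_card fun x hx => Finset.mem_range.mpr (hlt x hx)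
    rw [Finset.card_insert_of_notMem ha, Finset.sum_range_succ, Finset.sum_insert ha]
    omega

lemma choose_card_two_le_sum_of_injective {ι : Type*} [Fintype ι] {r : ι → ℕ}
    (hr : r.Injective) : (Fintype.card ι).choose 2 ≤ ∑ i, r i := by
  have hle := sum_range_card_le_sum (Finset.univ.map ⟨r, hr⟩)
  rwa [Finset.card_map, Finset.card_univ, Finset.sum_range_id, ← Nat.choose_two_right,
    Finset.sum_map] at hle

lemma abs_det_le_factorial_mul_prod {ι : Type*} [Fintype ι] [DecidableEq ι]
    (A : Matrix ι ι ℝ) {B : ι → ℝ} (h : ∀ i j, |A i j| ≤ B i) :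
    |A.det| ≤ (Fintype.card ι).factorial * ∏ i, B i := by
  rw [← Matrix.det_transpose, Matrix.det_apply]
  have hterm (σ : Equiv.Perm ι) :
      |Equiv.Perm.sign σ • ∏ i, A.transpose (σ i) i| ≤ ∏ i, B i := by
    have habs : |Equiv.Perm.sign σ • ∏ i, A.transpose (σ i) i| = ∏ i, |A i (σ i)| := by
      rcases Int.units_eq_one_or (Equiv.Perm.sign σ) with h | h <;>
        simp [h, Finset.abs_prod, Matrix.transpose_apply]
    rw [habs]
    exact Finset.prod_le_prod (fun i _ => abs_nonneg _) fun i _ => h i _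
  calc |∑ σ : Equiv.Perm ι, Equiv.Perm.sign σ • ∏ i, A.transpose (σ i) i|
      ≤ ∑ σ : Equiv.Perm ι, |Equiv.Perm.sign σ • ∏ i, A.transpose (σ i) i| :=
        Finset.abs_sum_le_sum_abs _ _
    _ ≤ ∑ _σ : Equiv.Perm ι, ∏ i, B i := Finset.sum_le_sum fun σ _ => hterm σ
    _ = (Fintype.card ι).factorial * ∏ i, B i := by simp [Fintype.card_perm]

section ExpDet

variable {ι : Type*} [Fintype ι] [DecidableEq ι] {w z : ι → ℝ} {A R : ℝ}

lemma abs_det_monomial_mul_pow_le (hR : 1 ≤ R) (hA : ∀ i j, |w i * z j| ≤ A) (hA0 : 0 ≤ A)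
    (r : ι → ℕ) :
    |(Matrix.of fun i j => (w i * z j) ^ r i / (r i).factorial).det| *
        R ^ (Fintype.card ι).choose 2 ≤
      (Fintype.card ι).factorial * ∏ i, ((A * R) ^ r i / (r i).factorial) := by
  have : 0 ≤ R := zero_le_one.trans hR
  by_cases hr : r.Injective
  · have hentry := abs_det_le_factorial_mul_prod
      (Matrix.of fun i j => (w i * z j) ^ r i / ((r i).factorial : ℝ))
      (B := fun i => A ^ r i / (r i).factorial) fun i j => by
        rw [Matrix.of_apply, abs_div, abs_pow, Nat.abs_cast]
        gcongr
        exact hA i j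
    calc _ ≤ ((Fintype.card ι).factorial * ∏ i, (A ^ r i / ((r i).factorial : ℝ))) *
          R ^ ∑ i, r i := by
            gcongr
            exact choose_card_two_le_sum_of_injective hr
      _ = (Fintype.card ι).factorial * ∏ i, ((A * R) ^ r i / (r i).factorial) := by
            rw [← Finset.prod_pow_eq_pow_sum, mul_assoc, ← Finset.prod_mul_distrib]
            congr! 2 with i
            rw [mul_pow]; ring
  · obtain ⟨a, b, hab, hne⟩ := Function.not_injective_iff.mp hr
    have hdet : (Matrix.of fun i j => (w i * z j) ^ r i / ((r i).factorial : ℝ)).det = 0 := by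
      have hfactor : (Matrix.of fun i j => (w i * z j) ^ r i / ((r i).factorial : ℝ)) =
          Matrix.of fun i j => (w i ^ r i / ((r i).factorial : ℝ)) *
            (Matrix.of fun i j => z j ^ r i) i j := by
        ext i j
        simp only [Matrix.of_apply, mul_pow]
        ring
      rw [hfactor, Matrix.det_mul_column,
        Matrix.det_zero_of_row_eq hne (by funext j; simp [hab]), mul_zero]
    rw [hdet, abs_zero, zero_mul]
    positivity

lemma abs_det_truncated_exp_mul_pow_le (hR : 1 ≤ R) (hA : ∀ i j, |w i * z j| ≤ A) (hA0 : 0 ≤ A)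
    (Q : ℕ) :
    |(Matrix.of fun i j => ∑ k : Fin Q, (w i * z j) ^ (k : ℕ) / (k : ℕ).factorial).det| *
        R ^ (Fintype.card ι).choose 2 ≤
      (Fintype.card ι).factorial * Real.exp (Fintype.card ι * (A * R)) := by
  set c : ℝ := ((Fintype.card ι).factorial : ℝ)
  have : 0 ≤ R := zero_le_one.trans hR
  have hexpand : (Matrix.of fun i j =>
      ∑ k : Fin Q, (w i * z j) ^ (k : ℕ) / ((k : ℕ).factorial : ℝ)).det =
      ∑ r : ι → Fin Q,
        (Matrix.of fun i j => (w i * z j) ^ (r i : ℕ) / ((r i : ℕ).factorial : ℝ)).det := by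
    have hrows : (Matrix.of fun i j =>
        ∑ k : Fin Q, (w i * z j) ^ (k : ℕ) / ((k : ℕ).factorial : ℝ)) =
        Matrix.of fun i => ∑ k : Fin Q, fun j =>
          (w i * z j) ^ (k : ℕ) / ((k : ℕ).factorial : ℝ) := by
      ext i j; simp
    rw [hrows]
    exact (Matrix.detRowAlternating (R := ℝ) (n := ι)).toMultilinearMap.map_sum
      fun i (k : Fin Q) j => (w i * z j) ^ (k : ℕ) / ((k : ℕ).factorial : ℝ)
  rw [hexpand]
  calc _ ≤ (∑ r : ι → Fin Q,
          |(Matrix.of fun i j => (w i * z j) ^ (r i : ℕ) / ((r i : ℕ).factorial : ℝ)).det|) *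
          R ^ (Fintype.card ι).choose 2 := by
        gcongr
        exact Finset.abs_sum_le_sum_abs _ _
    _ ≤ ∑ r : ι → Fin Q, c * ∏ i, ((A * R) ^ (r i : ℕ) / (r i : ℕ).factorial) := by
        rw [Finset.sum_mul]
        exact Finset.sum_le_sum fun r _ => abs_det_monomial_mul_pow_le hR hA hA0 fun i => r i
    _ = c * ∏ _i : ι, ∑ k ∈ Finset.range Q, (A * R) ^ k / k.factorial := by
        rw [← Finset.mul_sum]
        simp only [← Fin.sum_univ_eq_sum_range fun k => (A * R) ^ k / (k.factorial : ℝ)]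
        rw [Finset.prod_univ_sum, Fintype.piFinset_univ]
    _ ≤ c * ∏ _i : ι, Real.exp (A * R) := by
        gcongr
        exact Real.sum_le_exp_of_nonneg (by positivity) _
    _ = c * Real.exp (Fintype.card ι * (A * R)) := by
        rw [Finset.prod_const, Finset.card_univ, ← Real.exp_nat_mul]

lemma abs_det_exp_mul_pow_le (hR : 1 ≤ R) (hA : ∀ i j, |w i * z j| ≤ A) (hA0 : 0 ≤ A) :
    |(Matrix.of fun i j => Real.exp (w i * z j)).det| * R ^ (Fintype.card ι).choose 2 ≤
      (Fintype.card ι).factorial * Real.exp (Fintype.card ι * (A * R)) := by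
  have hlim : Tendsto (fun Q : ℕ => Matrix.of fun i j =>
      ∑ k : Fin Q, (w i * z j) ^ (k : ℕ) / ((k : ℕ).factorial : ℝ)) atTop
      (nhds (Matrix.of fun i j => Real.exp (w i * z j))) := by
    refine tendsto_pi_nhds.mpr fun i => tendsto_pi_nhds.mpr fun j => ?_
    have hsum := (NormedSpace.expSeries_div_hasSum_exp (w i * z j)).tendsto_sum_nat
    rw [← Real.exp_eq_exp_ℝ] at hsum
    refine hsum.congr fun Q => ?_
    rw [Matrix.of_apply,
      Fin.sum_univ_eq_sum_range fun k => (w i * z j) ^ k / (k.factorial : ℝ)]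
  have hcont : Continuous fun M : Matrix ι ι ℝ => |M.det| * R ^ (Fintype.card ι).choose 2 :=
    continuous_id.matrix_det.abs.mul continuous_const
  exact le_of_tendsto ((hcont.tendsto _).comp hlim)
    (Eventually.of_forall fun Q => abs_det_truncated_exp_mul_pow_le hR hA hA0 Q)

end ExpDet

/-! ### A six exponentials theorem -/

lemma card_sub_one_div_two_le_of_mul_exp_mem_intCast {ι : Type*} [Fintype ι] [Nonempty ι]
    {w z : ι → ℝ} (hw : w.Injective) (hz : z.Injective) {A : ℝ} (hA : ∀ i j, |w i * z j| ≤ A)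
    {D : ℕ} (hD : D ≠ 0)
    (hint : ∀ i j, (D : ℝ) * Real.exp (w i * z j) ∈ (Int.castRingHom ℝ).range) :
    ((Fintype.card ι : ℝ) - 1) / 2 ≤
      Real.log D + Real.log (Fintype.card ι) + A * Real.exp 1 := by
  classical
  obtain ⟨i₀⟩ := ‹Nonempty ι›
  have hA0 : 0 ≤ A := (abs_nonneg _).trans (hA i₀ i₀)
  set N := Fintype.card ι
  have hN : 1 ≤ N := Fintype.card_pos_iff.mpr ⟨i₀⟩
  have hN0 : (0 : ℝ) < N := by exact_mod_cast hN
  have hD0 : (0 : ℝ) < D := by exact_mod_cast hD.bot_lt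
  set Δ := (Matrix.of fun i j => Real.exp (w i * z j)).det
  have hΔ : Δ ≠ 0 := det_exp_mul_ne_zero hw hz
  have hliouville : 1 ≤ (D : ℝ) ^ N * |Δ| := by
    choose k hk using hint
    have hdet : (D : ℝ) ^ N * Δ = ((Matrix.of k).det : ℤ) := by
      rw [Int.cast_det, ← Matrix.det_smul]
      congr 1
      ext i j
      exact (hk i j).symm
    have hne : (Matrix.of k).det ≠ 0 := fun h =>
      mul_ne_zero (pow_ne_zero N hD0.ne') hΔ (by rw [hdet, h, Int.cast_zero])
    rw [← abs_of_pos (pow_pos hD0 N), ← abs_mul, hdet, ← Int.cast_abs]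
    exact_mod_cast Int.one_le_abs hne
  have hpow : Real.exp 1 ^ N.choose 2 ≤ (D * N * Real.exp (A * Real.exp 1)) ^ N :=
    calc Real.exp 1 ^ N.choose 2 = 1 * Real.exp 1 ^ N.choose 2 := (one_mul _).symm
      _ ≤ (D : ℝ) ^ N * |Δ| * Real.exp 1 ^ N.choose 2 := by gcongr
      _ = (D : ℝ) ^ N * (|Δ| * Real.exp 1 ^ N.choose 2) := mul_assoc _ _ _
      _ ≤ (D : ℝ) ^ N * (N.factorial * Real.exp (N * (A * Real.exp 1))) := by
          gcongr ?_ * ?_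
          exact abs_det_exp_mul_pow_le (Real.one_le_exp zero_le_one) hA hA0
      _ ≤ (D : ℝ) ^ N * ((N : ℝ) ^ N * Real.exp (N * (A * Real.exp 1))) := by
          gcongr
          exact_mod_cast Nat.factorial_le_pow N
      _ = (D * N * Real.exp (A * Real.exp 1)) ^ N := by
          rw [Real.exp_nat_mul]; ring
  have hlog := Real.log_le_log (by positivity) hpow
  rw [Real.log_pow, Real.log_pow, Real.log_exp, mul_one, Real.log_mul (by positivity)
    (by positivity), Real.log_mul hD0.ne' hN0.ne', Real.log_exp, Nat.cast_choose_two] at hlog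
  refine le_of_mul_le_mul_left ?_ hN0
  linarith

lemma injective_natCast_add_natCast_mul_of_irrational {c : ℝ} (hc : Irrational c) :
    Function.Injective fun a : ℕ × ℕ => (a.1 + a.2 * c : ℝ) := by
  rintro ⟨a, b⟩ ⟨a', b'⟩ h
  have hb : b = b' := by
    by_contra hne
    have hne' : (b : ℝ) - b' ≠ 0 := sub_ne_zero.mpr (by exact_mod_cast hne)
    refine hc ⟨((a' : ℚ) - a) / (b - b'), ?_⟩
    push_cast
    rw [div_eq_iff hne']
    linarith
  subst hb
  simpa using h

section RationalExponentials

variable {ι : Type*} [Fintype ι] {c : ℝ} {x : ι → ℝ} {b b' : ι → ℚ}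

lemma injective_sum_natCast_mul_of_linearIndependent (hx : LinearIndependent ℤ x) :
    Function.Injective fun l : ι → ℕ => ∑ i, (l i : ℝ) * x i := by
  intro l l' h
  have hdiff : ∑ i, ((l i : ℤ) - l' i) • x i = 0 := by
    simpa [sub_mul, sub_eq_zero] using h
  funext i
  exact_mod_cast sub_eq_zero.mp (Fintype.linearIndependent_iff.mp hx _ hdiff i)

lemma den_pow_mul_ratCast_pow_mem_intCast (q : ℚ) {m M : ℕ} (h : m ≤ M) :
    (q.den : ℝ) ^ M * (q : ℝ) ^ m ∈ (Int.castRingHom ℝ).range := by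
  have hnum : (q.den : ℝ) * q = q.num := by exact_mod_cast Rat.den_mul_eq_num q
  refine ⟨(q.den : ℤ) ^ (M - m) * q.num ^ m, ?_⟩
  simp only [eq_intCast, Int.cast_mul, Int.cast_pow, Int.cast_natCast, ← hnum, mul_pow]
  rw [← mul_assoc, ← pow_add, Nat.sub_add_cancel h]

lemma den_pow_mul_exp_mem_intCast (hb : ∀ i, Real.exp (x i) = b i)
    (hb' : ∀ i, Real.exp (c * x i) = b' i) (a : ℕ × ℕ) (l : ι → ℕ) {M : ℕ}
    (h₁ : ∀ i, a.1 * l i ≤ M) (h₂ : ∀ i, a.2 * l i ≤ M) :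
    ((∏ i, (b i).den * (b' i).den : ℕ) ^ M : ℕ) * Real.exp ((a.1 + a.2 * c) * ∑ i, l i * x i) ∈
      (Int.castRingHom ℝ).range := by
  have hexp : Real.exp ((a.1 + a.2 * c) * ∑ i, l i * x i) =
      ∏ i, ((b i : ℝ) ^ (a.1 * l i) * (b' i : ℝ) ^ (a.2 * l i)) := by
    rw [Finset.mul_sum, Real.exp_sum]
    refine Finset.prod_congr rfl fun i _ => ?_
    rw [← hb, ← hb', ← Real.exp_nat_mul, ← Real.exp_nat_mul, ← Real.exp_add]
    push_cast
    ring_nf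
  have hfactor : ((∏ i, (b i).den * (b' i).den : ℕ) ^ M : ℕ) *
      Real.exp ((a.1 + a.2 * c) * ∑ i, l i * x i) =
      ∏ i, (((b i).den : ℝ) ^ M * (b i : ℝ) ^ (a.1 * l i)) *
        (((b' i).den : ℝ) ^ M * (b' i : ℝ) ^ (a.2 * l i)) := by
    rw [hexp, Nat.cast_pow, Nat.cast_prod, ← Finset.prod_pow, ← Finset.prod_mul_distrib]
    refine Finset.prod_congr rfl fun i _ => ?_
    push_cast
    ring
  rw [hfactor]
  exact Subring.prod_mem _ fun i _ => Subring.mul_mem _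
    (den_pow_mul_ratCast_pow_mem_intCast _ (h₁ i)) (den_pow_mul_ratCast_pow_mem_intCast _ (h₂ i))

lemma abs_natCast_add_mul_mul_sum_le (c : ℝ) (x : ι → ℝ) {a : ℕ × ℕ} {l : ι → ℕ} {m n : ℕ}
    (ha₁ : a.1 ≤ m) (ha₂ : a.2 ≤ m) (hl : ∀ i, l i ≤ n) :
    |(a.1 + a.2 * c) * ∑ i, l i * x i| ≤ m * n * ((1 + |c|) * ∑ i, |x i|) := by
  have hleft : |(a.1 + a.2 * c : ℝ)| ≤ m * (1 + |c|) := by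
    calc |(a.1 + a.2 * c : ℝ)| ≤ |(a.1 : ℝ)| + |a.2 * c| := abs_add_le _ _
      _ = a.1 + a.2 * |c| := by rw [abs_mul, Nat.abs_cast, Nat.abs_cast]
      _ ≤ m + m * |c| := by gcongr
      _ = m * (1 + |c|) := by ring
  have hright : |∑ i, l i * x i| ≤ n * ∑ i, |x i| := by
    refine (Finset.abs_sum_le_sum_abs _ _).trans ?_
    rw [Finset.mul_sum]
    refine Finset.sum_le_sum fun i _ => ?_
    rw [abs_mul, Nat.abs_cast]
    gcongr
    exact hl i
  calc |(a.1 + a.2 * c) * ∑ i, l i * x i| ≤ (m * (1 + |c|)) * (n * ∑ i, |x i|) := by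
        rw [abs_mul]; gcongr
    _ = m * n * ((1 + |c|) * ∑ i, |x i|) := by ring

end RationalExponentials

/-- The points `a₁ + a₂ c` with `a₁, a₂ < K²` and `∑ lᵢ xᵢ` with `lᵢ < K` are equinumerous, and
their `K⁴ × K⁴` exponential determinant has entries of height only `O(K³)`. -/
lemma pow_four_sub_one_div_two_le {c : ℝ} (hc : Irrational c) {x : Fin 4 → ℝ}
    {b b' : Fin 4 → ℚ} (hb : ∀ i, Real.exp (x i) = b i) (hb' : ∀ i, Real.exp (c * x i) = b' i)
    (hx : LinearIndependent ℤ x) {K : ℕ} (hK : 1 ≤ K) :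
    ((K : ℝ) ^ 4 - 1) / 2 ≤ K ^ 3 * Real.log (∏ i, (b i).den * (b' i).den : ℕ) +
      4 * Real.log K + K ^ 3 * ((1 + |c|) * ∑ i, |x i|) * Real.exp 1 := by
  have : NeZero K := ⟨by omega⟩
  have : NeZero (K ^ 2) := ⟨by positivity⟩
  let e : (Fin 4 → Fin K) ≃ Fin (K ^ 2) × Fin (K ^ 2) :=
    Fintype.equivOfCardEq (by simp; ring)
  let a (t : Fin 4 → Fin K) : ℕ × ℕ := Prod.map Fin.val Fin.val (e t)
  let l (t : Fin 4 → Fin K) : Fin 4 → ℕ := fun i => t i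
  have ha : a.Injective := (Fin.val_injective.prodMap Fin.val_injective).comp e.injective
  have hl : l.Injective := fun t t' h => funext fun i => Fin.ext (congrFun h i)
  have ha₁ (t) : (a t).1 ≤ K ^ 2 := (e t).1.2.le
  have ha₂ (t) : (a t).2 ≤ K ^ 2 := (e t).2.2.le
  have hlK (t i) : l t i ≤ K := (t i).2.le
  have hmain := card_sub_one_div_two_le_of_mul_exp_mem_intCast
    ((injective_natCast_add_natCast_mul_of_irrational hc).comp ha)
    ((injective_sum_natCast_mul_of_linearIndependent hx).comp hl)
    (fun s t => abs_natCast_add_mul_mul_sum_le c x (ha₁ s) (ha₂ s) (hlK t))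
    (pow_ne_zero (K ^ 3) (Finset.prod_ne_zero_iff.mpr fun i _ =>
      mul_ne_zero (b i).den_ne_zero (b' i).den_ne_zero))
    (fun s t => den_pow_mul_exp_mem_intCast hb hb' (a s) (l t)
      (fun i => (Nat.mul_le_mul (ha₁ s) (hlK t i)).trans_eq (by ring))
      (fun i => (Nat.mul_le_mul (ha₂ s) (hlK t i)).trans_eq (by ring)))
  have hcard : (Fintype.card (Fin 4 → Fin K) : ℝ) = (K : ℝ) ^ 4 := by simp
  rw [hcard, Nat.cast_pow (_ : ℕ) (K ^ 3), Real.log_pow, Real.log_pow] at hmain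
  push_cast at hmain ⊢
  convert hmain using 2
  ring

/-- A weak form of the six exponentials theorem, with four points in place of three. -/
theorem not_linearIndependent_of_exp_eq_ratCast {c : ℝ} (hc : Irrational c)
    {x : Fin 4 → ℝ} {b b' : Fin 4 → ℚ} (hb : ∀ i, Real.exp (x i) = b i)
    (hb' : ∀ i, Real.exp (c * x i) = b' i) : ¬ LinearIndependent ℤ x := by
  intro hx
  set L := Real.log (∏ i, (b i).den * (b' i).den : ℕ)
  set A := (1 + |c|) * ∑ i, |x i|
  have hL : 0 ≤ L := Real.log_natCast_nonneg _
  obtain ⟨K, hK⟩ := exists_nat_gt (2 * (L + 4 + A * Real.exp 1) + 1)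
  have hAe : 0 ≤ A * Real.exp 1 := by positivity
  have hK1 : (1 : ℝ) ≤ K := by linarith
  have hbound := pow_four_sub_one_div_two_le hc hb hb' hx (by exact_mod_cast hK1)
  have hK3 : (1 : ℝ) ≤ (K : ℝ) ^ 3 := one_le_pow₀ hK1
  have hlogK : Real.log K ≤ (K : ℝ) ^ 3 :=
    calc Real.log K ≤ K - 1 := Real.log_le_sub_one_of_pos (by linarith)
      _ ≤ K := by linarith
      _ ≤ (K : ℝ) ^ 3 := le_self_pow₀ hK1 (by norm_num)
  have hupper : ((K : ℝ) ^ 4 - 1) / 2 ≤ (K : ℝ) ^ 3 * (L + 4 + A * Real.exp 1) := by linarith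
  have hlower : (K : ℝ) ^ 3 * (2 * (L + 4 + A * Real.exp 1) + 1) < (K : ℝ) ^ 3 * K := by gcongr
  linarith [hupper, show (K : ℝ) ^ 3 * K = (K : ℝ) ^ 4 by ring]

/-! ### Rational numbers with a rational irrational power -/

/-- `IsRatPow c q` says that the positive rational `q` has a rational `c`-th power. For irrational
`c`, these `q` give the only non-negligible correlations in the mean squares below. -/
def IsRatPow (c : ℝ) (q : ℚ) : Prop := 0 < q ∧ ∃ a : ℚ, (q : ℝ) ^ c = a

lemma IsRatPow.div {c : ℝ} {q q' : ℚ} (h : IsRatPow c q) (h' : IsRatPow c q') :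
    IsRatPow c (q / q') := by
  obtain ⟨hq, a, ha⟩ := h
  obtain ⟨hq', a', ha'⟩ := h'
  refine ⟨div_pos hq hq', a / a', ?_⟩
  rw [Rat.cast_div, Rat.cast_div, ← ha, ← ha',
    Real.div_rpow (by exact_mod_cast hq.le) (by exact_mod_cast hq'.le)]

lemma exists_prime_padicValRat_ne_zero {q : ℚ} (hq : 0 < q) (hq1 : q ≠ 1) :
    ∃ p : ℕ, p.Prime ∧ padicValRat p q ≠ 0 := by
  contrapose! hq1
  have hnum : 0 < q.num := Rat.num_pos.mpr hq
  have hnat : q.num.natAbs = q.den := by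
    rw [Nat.eq_iff_prime_padicValNat_eq _ _ (by lia) q.den_ne_zero]
    intro p hp
    have := hq1 p hp
    rw [padicValRat_def, sub_eq_zero, padicValInt] at this
    exact_mod_cast this
  have hint : q.num = q.den := by lia
  rw [← Rat.num_div_den q, hint]
  exact div_self (by exact_mod_cast q.den_ne_zero)

lemma padicValRat_prod {ι : Type*} (p : ℕ) [Fact p.Prime] (s : Finset ι) {f : ι → ℚ}
    (hf : ∀ i ∈ s, f i ≠ 0) : padicValRat p (∏ i ∈ s, f i) = ∑ i ∈ s, padicValRat p (f i) := by
  induction s using Finset.cons_induction with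
  | empty => simp
  | cons i s hi ih =>
    rw [Finset.forall_mem_cons] at hf
    rw [Finset.prod_cons, Finset.sum_cons,
      padicValRat.mul hf.1 (Finset.prod_ne_zero_iff.mpr hf.2), ih hf.2]

lemma sum_mul_padicValRat_eq_zero {ι : Type*} [Fintype ι] {q : ι → ℚ} (hq : ∀ i, 0 < q i)
    {k : ι → ℤ} (hk : ∑ i, k i • Real.log (q i) = 0) {p : ℕ} (hp : p.Prime) :
    ∑ i, k i * padicValRat p (q i) = 0 := by
  have := Fact.mk hp
  have hq' (i) : (0 : ℝ) < q i := by exact_mod_cast hq i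
  have hprod : ∏ i, (q i : ℝ) ^ k i = 1 := by
    apply Real.eq_one_of_pos_of_log_eq_zero (Finset.prod_pos fun i _ => zpow_pos (hq' i) _)
    rw [Real.log_prod fun i _ => (zpow_pos (hq' i) _).ne']
    simpa only [Real.log_zpow, zsmul_eq_mul] using hk
  have hprodQ : ∏ i, q i ^ k i = 1 := by exact_mod_cast hprod
  have hval := congrArg (padicValRat p) hprodQ
  rw [padicValRat_prod p _ fun i _ => (zpow_pos (hq i) _).ne', padicValRat.one] at hval
  simpa only [padicValRat.zpow] using hval

lemma linearIndependent_log_of_padicValRat {n : ℕ} {q : Fin n → ℚ} (hq : ∀ i, 0 < q i)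
    {p : Fin n → ℕ} (hp : ∀ i, (p i).Prime) (hdiag : ∀ i, padicValRat (p i) (q i) ≠ 0)
    (htri : ∀ i j, i < j → padicValRat (p i) (q j) = 0) :
    LinearIndependent ℤ fun i => Real.log (q i) := by
  rw [Fintype.linearIndependent_iff]
  intro k hk i
  induction i using WellFoundedLT.induction with
  | ind i ih =>
    have hsum := sum_mul_padicValRat_eq_zero hq hk (hp i)
    rw [Fintype.sum_eq_single i] at hsum
    · exact (mul_eq_zero.mp hsum).resolve_right (hdiag i)
    · intro j hj
      rcases hj.lt_or_gt with hlt | hgt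
      · rw [ih j hlt, zero_mul]
      · rw [htri i j hgt, mul_zero]

/-- Otherwise one could choose, one after the other, four rationals whose logarithms are
independent, against the six exponentials theorem. -/
lemma exists_finset_primes_separating {c : ℝ} (hc : Irrational c) :
    ∃ P : Finset ℕ, (∀ p ∈ P, p.Prime) ∧
      ∀ q : ℚ, IsRatPow c q → (∀ p ∈ P, padicValRat p q = 0) → q = 1 := by
  by_contra! hcon
  obtain ⟨f, hf, hfr⟩ := exists_seq_of_forall_finset_exists
    (fun x : ℚ × ℕ => IsRatPow c x.1 ∧ x.2.Prime ∧ padicValRat x.2 x.1 ≠ 0)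
    (fun x y => padicValRat x.2 y.1 = 0) (by
      intro s hs
      obtain ⟨q, hq, hval, hq1⟩ := hcon (s.image Prod.snd)
        (Finset.forall_mem_image.mpr fun x hx => (hs x hx).2.1)
      obtain ⟨p, hp, hpq⟩ := exists_prime_padicValRat_ne_zero hq.1 hq1
      exact ⟨(q, p), ⟨hq, hp, hpq⟩, fun x hx => hval _ (Finset.mem_image_of_mem _ hx)⟩)
  have hpos (i : Fin 4) : (0 : ℝ) < (f i).1 := by exact_mod_cast (hf i).1.1
  choose a ha using fun i : Fin 4 => (hf i).1.2
  refine not_linearIndependent_of_exp_eq_ratCast hc (b := fun i => (f i).1) (b' := a)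
    (fun i => Real.exp_log (hpos i)) (fun i => ?_)
    (linearIndependent_log_of_padicValRat (fun i => (hf i).1.1) (fun i => (hf i).2.1)
      (fun i => (hf i).2.2) fun i j hij => hfr i j hij)
  rw [← ha, Real.rpow_def_of_pos (hpos i), mul_comm]

lemma summable_pi_prod_of_nonneg {ι α : Type*} [Fintype ι] {f : α → ℝ} (h0 : ∀ x, 0 ≤ f x)
    (hf : Summable f) : Summable fun v : ι → α => ∏ i, f (v i) := by
  classical
  refine summable_of_sum_le (c := ∏ _i : ι, ∑' x, f x)
    (fun v => Finset.prod_nonneg fun i _ => h0 _) fun u => ?_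
  calc ∑ v ∈ u, ∏ i, f (v i)
      ≤ ∑ v ∈ Fintype.piFinset fun i => u.image fun v => v i, ∏ i, f (v i) :=
        Finset.sum_le_sum_of_subset_of_nonneg
          (fun v hv => Fintype.mem_piFinset.mpr fun i => Finset.mem_image_of_mem _ hv)
          fun v _ _ => Finset.prod_nonneg fun i _ => h0 _
    _ = ∏ i, ∑ x ∈ u.image fun v => v i, f x := by rw [Finset.prod_univ_sum]
    _ ≤ ∏ _i : ι, ∑' x, f x :=
        Finset.prod_le_prod (fun i _ => Finset.sum_nonneg fun _ _ => h0 _)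
          fun i _ => hf.sum_le_tsum _ fun _ _ => h0 _

lemma summable_pow_natAbs {r : ℝ} (h0 : 0 ≤ r) (h1 : r < 1) :
    Summable fun k : ℤ => r ^ k.natAbs :=
  have hgeom := summable_geometric_of_lt_one h0 h1
  Summable.of_nat_of_neg (by simpa using hgeom) (by simpa using hgeom)

lemma prod_two_pow_natAbs_padicValRat_le {P : Finset ℕ} (hP : ∀ p ∈ P, p.Prime) {m n : ℕ}
    (hm : m ≠ 0) (hn : n ≠ 0) :
    ∏ p ∈ P, 2 ^ (padicValRat p ((m : ℚ) / n)).natAbs ≤ m * n := by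
  calc ∏ p ∈ P, 2 ^ (padicValRat p ((m : ℚ) / n)).natAbs
      ≤ ∏ p ∈ P, p ^ padicValNat p (m * n) := by
        refine Finset.prod_le_prod (fun _ _ => by positivity) fun p hp => ?_
        have := Fact.mk (hP p hp)
        rw [padicValRat.div (by exact_mod_cast hm) (by exact_mod_cast hn), padicValRat.of_nat,
          padicValRat.of_nat, padicValNat.mul hm hn]
        calc 2 ^ ((padicValNat p m : ℤ) - padicValNat p n).natAbs
            ≤ 2 ^ (padicValNat p m + padicValNat p n) :=
              Nat.pow_le_pow_right (by norm_num) (by lia)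
          _ ≤ p ^ (padicValNat p m + padicValNat p n) :=
              Nat.pow_le_pow_left (hP p hp).two_le _
    _ ≤ m * n := by
        refine Nat.le_of_dvd (by positivity)
          (Finset.prod_dvd_of_isRelPrime (fun p hp q hq hpq => ?_) fun p _ => pow_padicValNat_dvd)
        exact Nat.coprime_iff_isRelPrime.mp
          (((Nat.coprime_primes (hP p hp) (hP q hq)).mpr hpq).pow _ _)

lemma gcd_sq_mul_prod_two_pow_le {P : Finset ℕ} (hP : ∀ p ∈ P, p.Prime) {m n : ℕ}
    (hm : m ≠ 0) (hn : n ≠ 0) :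
    m.gcd n ^ 2 * ∏ p ∈ P, 2 ^ (padicValRat p ((m : ℚ) / n)).natAbs ≤ m * n := by
  obtain ⟨g, m', n', hg, hcop, rfl, rfl⟩ :=
    Nat.exists_coprime' (Nat.gcd_pos_of_pos_left n (Nat.pos_of_ne_zero hm))
  have hfrac : ((m' * g : ℕ) : ℚ) / (n' * g : ℕ) = (m' : ℚ) / n' := by
    push_cast
    exact mul_div_mul_right _ _ (by exact_mod_cast hg.ne')
  rw [Nat.gcd_mul_right, hcop.gcd_eq_one, one_mul, hfrac]
  calc g ^ 2 * ∏ p ∈ P, 2 ^ (padicValRat p ((m' : ℚ) / n')).natAbs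
      ≤ g ^ 2 * (m' * n') := Nat.mul_le_mul_left _
        (prod_two_pow_natAbs_padicValRat_le hP (left_ne_zero_of_mul hm) (left_ne_zero_of_mul hn))
    _ = m' * g * (n' * g) := by ring

lemma eq_and_eq_of_gcd_eq_of_div_eq {m n m' n' : ℕ} (hm : m ≠ 0) (hn : n ≠ 0) (hn' : n' ≠ 0)
    (hgcd : m.gcd n = m'.gcd n') (hdiv : (m : ℚ) / n = m' / n') : m = m' ∧ n = n' := by
  rw [div_eq_div_iff (by exact_mod_cast hn) (by exact_mod_cast hn')] at hdiv
  have hcross : m * n' = m' * n := by exact_mod_cast hdiv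
  have hmul : m * m.gcd n = m' * m.gcd n := by
    calc m * m.gcd n = m * m'.gcd n' := by rw [hgcd]
      _ = (m * m').gcd (m * n') := (Nat.gcd_mul_left _ _ _).symm
      _ = (m' * m).gcd (m' * n) := by rw [hcross, mul_comm m m']
      _ = m' * m.gcd n := Nat.gcd_mul_left _ _ _
  obtain rfl : m = m' :=
    Nat.eq_of_mul_eq_mul_right (Nat.gcd_pos_of_pos_left n (Nat.pos_of_ne_zero hm)) hmul
  exact ⟨rfl, (Nat.eq_of_mul_eq_mul_left (Nat.pos_of_ne_zero hm) hcross).symm⟩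

lemma mul_rpow_neg_le_of_primes {P : Finset ℕ} (hP : ∀ p ∈ P, p.Prime) {m n : ℕ} (hm : m ≠ 0)
    (hn : n ≠ 0) {σ : ℝ} (hσ : 0 ≤ σ) :
    ((m : ℝ) * n) ^ (-σ) ≤ ((m.gcd n : ℕ) : ℝ) ^ (-(2 * σ)) *
      ∏ p : P, ((2 : ℝ) ^ (-σ)) ^ (padicValRat p ((m : ℚ) / n)).natAbs := by
  have hle : ((m.gcd n : ℕ) : ℝ) ^ 2 * ∏ p ∈ P, (2 : ℝ) ^ (padicValRat p ((m : ℚ) / n)).natAbs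
      ≤ (m : ℝ) * n := by exact_mod_cast gcd_sq_mul_prod_two_pow_le hP hm hn
  have hgcd : (0 : ℝ) < (m.gcd n : ℕ) := by
    exact_mod_cast Nat.gcd_pos_of_pos_left n (Nat.pos_of_ne_zero hm)
  refine (Real.rpow_le_rpow_of_nonpos (by positivity) hle (by linarith)).trans_eq ?_
  rw [Real.mul_rpow (by positivity) (by positivity), ← Real.rpow_natCast_mul hgcd.le,
    ← Real.finsetProd_rpow _ _ fun i _ => by positivity, ← Finset.prod_coe_sort]
  simp only [← Real.rpow_mul_natCast zero_le_two, ← Real.rpow_natCast_mul zero_le_two]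
  push_cast
  simp only [mul_neg, neg_mul, mul_comm]

lemma IsRatPow.ne_zero_of_natCast_div {c : ℝ} {m n : ℕ} (h : IsRatPow c ((m : ℚ) / n)) :
    m ≠ 0 ∧ n ≠ 0 := by
  have := div_ne_zero_iff.mp h.1.ne'
  exact_mod_cast this

lemma injective_gcd_padicValRat_of_separating {c : ℝ} {P : Finset ℕ} (hP : ∀ p ∈ P, p.Prime)
    (hsep : ∀ q : ℚ, IsRatPow c q → (∀ p ∈ P, padicValRat p q = 0) → q = 1) :
    Function.Injective fun x : {x : ℕ × ℕ // IsRatPow c ((x.1 : ℚ) / x.2)} =>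
      (x.1.1.gcd x.1.2, fun p : P => padicValRat p ((x.1.1 : ℚ) / x.1.2)) := by
  rintro ⟨⟨m, n⟩, h⟩ ⟨⟨m', n'⟩, h'⟩ heq
  obtain ⟨hgcd, hval⟩ := Prod.mk.inj heq
  have hdiv := hsep _ (h.div h') fun p hp => by
    have := Fact.mk (hP p hp)
    rw [padicValRat.div h.1.ne' h'.1.ne', sub_eq_zero]
    exact congrFun hval ⟨p, hp⟩
  rw [div_eq_one_iff_eq h'.1.ne'] at hdiv
  obtain ⟨hm, hn⟩ := h.ne_zero_of_natCast_div
  obtain ⟨rfl, rfl⟩ :=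
    eq_and_eq_of_gcd_eq_of_div_eq hm hn h'.ne_zero_of_natCast_div.2 hgcd hdiv
  rfl

/-- A pair `(m, n)` with `IsRatPow c (m / n)` is determined by `gcd m n` and finitely many
valuations of `m / n`. -/
lemma summable_mul_rpow_neg_of_isRatPow {c : ℝ} (hc : Irrational c) {σ : ℝ} (hσ : 1 / 2 < σ) :
    Summable ({x : ℕ × ℕ | IsRatPow c ((x.1 : ℚ) / x.2)}.indicator
      fun x => ((x.1 : ℝ) * x.2) ^ (-σ)) := by
  obtain ⟨P, hP, hsep⟩ := exists_finset_primes_separating hc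
  have hval : Summable fun v : P → ℤ => ∏ p, ((2 : ℝ) ^ (-σ)) ^ (v p).natAbs :=
    summable_pi_prod_of_nonneg (f := fun k : ℤ => ((2 : ℝ) ^ (-σ)) ^ k.natAbs)
      (fun k => by positivity) (summable_pow_natAbs (by positivity)
        (Real.rpow_lt_one_of_one_lt_of_neg one_lt_two (by linarith)))
  have hgcd : Summable fun k : ℕ => (k : ℝ) ^ (-(2 * σ)) :=
    Real.summable_nat_rpow.mpr (by linarith)
  have hsummable := hgcd.mul_of_nonneg hval (fun k => by positivity) fun v => by
    simp only [Pi.zero_apply]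
    positivity
  rw [← summable_subtype_iff_indicator]
  refine Summable.of_nonneg_of_le (fun x => ?_) (fun x => ?_)
    (hsummable.comp_injective (injective_gcd_padicValRat_of_separating hP hsep))
  · simp only [Function.comp_apply]
    positivity
  · obtain ⟨hm, hn⟩ := x.2.ne_zero_of_natCast_div
    exact mul_rpow_neg_le_of_primes hP hm hn (by linarith)

open Classical in
lemma eventually_sum_isRatPow_le {c : ℝ} (hc : Irrational c) {σ : ℝ} (hσ : 1 / 2 < σ) {ρ : ℝ}
    (hρ : 0 < ρ) :
    ∀ᶠ N : ℕ in atTop, ∀ Y : ℕ, ∑ m ∈ Finset.Ioc N Y, ∑ n ∈ Finset.Ioc N Y,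
      (if IsRatPow c ((m : ℚ) / n) then ((m : ℝ) * n) ^ (-σ) else 0) ≤ ρ := by
  obtain ⟨s, hs⟩ := summable_iff_vanishing_norm.mp (summable_mul_rpow_neg_of_isRatPow hc hσ) ρ hρ
  filter_upwards [eventually_ge_atTop (s.sup Prod.fst)] with N hN Y
  have hsum := hs (Finset.Ioc N Y ×ˢ Finset.Ioc N Y) <| by
    refine Finset.disjoint_left.mpr fun x hx hxs => ?_
    have hle : x.1 ≤ s.sup Prod.fst := Finset.le_sup (f := Prod.fst) hxs
    have := (Finset.mem_Ioc.mp (Finset.mem_product.mp hx).1).1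
    lia
  rw [Finset.sum_product] at hsum
  exact (le_abs_self _).trans hsum.le

/-! ### The alternating zeta function -/

/-- The `k`-th iterated difference of `x ↦ x ^ (-s)`, with the sign `f x - f (x + 1)`; it decays
like `x ^ (-Re s - k)`. -/
noncomputable def cpowDiff : ℕ → ℂ → ℝ → ℂ
  | 0, s, x => (x : ℂ) ^ (-s)
  | k + 1, s, x => cpowDiff k s x - cpowDiff k s (x + 1)

/-- The alternating sum `∑ n ≥ X, (-1) ^ (n - X) * cpowDiff k s n`. -/
noncomputable def altSum (k : ℕ) (s : ℂ) (X : ℕ) : ℂ :=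
  ∑' n : ℕ, (-1) ^ n * cpowDiff k s (X + n : ℕ)

/-- The tail `∑ n ≥ X, (-1) ^ (n - X) * n ^ (-s)` of the alternating zeta series, after one step
of the Euler transformation so that the series converges absolutely for `0 < Re s`. -/
noncomputable def etaTail (s : ℂ) (X : ℕ) : ℂ := (cpowDiff 0 s X + altSum 1 s X) / 2

lemma hasDerivAt_cpowDiff (k : ℕ) (s : ℂ) {x : ℝ} (hx : 0 < x) :
    HasDerivAt (cpowDiff k s) (-s * cpowDiff k (s + 1) x) x := by
  induction k generalizing x with
  | zero =>
    have hderiv := ((hasDerivAt_id (x : ℂ)).cpow_const (c := -s)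
      (by simp [Complex.mem_slitPlane_iff, hx])).comp_ofReal
    simpa only [cpowDiff, id, mul_one, neg_add, ← sub_eq_add_neg] using hderiv
  | succ k ih =>
    simp only [cpowDiff, mul_sub]
    exact (ih hx).sub ((ih (x := x + 1) (by linarith)).comp_add_const x 1)

lemma norm_cpowDiff_le (k : ℕ) {s : ℂ} {x : ℝ} (hx : 0 < x) (hs : 0 ≤ s.re) :
    ‖cpowDiff k s x‖ ≤ (‖s‖ + k) ^ k * x ^ (-s.re - k) := by
  induction k generalizing s x with
  | zero => simp [cpowDiff, Complex.norm_cpow_eq_rpow_re_of_pos hx]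
  | succ k ih =>
    have hderiv : ∀ y ∈ Set.Icc x (x + 1), ‖-s * cpowDiff k (s + 1) y‖ ≤
        ‖s‖ * ((‖s‖ + (k + 1 : ℕ)) ^ k * x ^ (-s.re - (k + 1 : ℕ))) := by
      intro y hy
      rw [norm_mul, norm_neg]
      refine mul_le_mul_of_nonneg_left ((ih (hx.trans_le hy.1) ?_).trans ?_) (norm_nonneg _)
      · simp only [add_re, one_re]
        linarith
      have hnorm : ‖s + 1‖ + k ≤ ‖s‖ + (k + 1 : ℕ) := by
        push_cast
        linarith [norm_add_le s 1, norm_one (α := ℂ)]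
      have hexp : -(s + 1).re - (k : ℝ) = -s.re - (k + 1 : ℕ) := by
        simp only [add_re, one_re, Nat.cast_add, Nat.cast_one]
        ring
      have hrpow : y ^ (-(s + 1).re - (k : ℝ)) ≤ x ^ (-s.re - (k + 1 : ℕ)) := by
        rw [hexp]
        exact Real.rpow_le_rpow_of_nonpos hx hy.1
          (by linarith [(k + 1 : ℕ).cast_nonneg (α := ℝ)])
      exact mul_le_mul (pow_le_pow_left₀ (by positivity) hnorm k) hrpow
        (Real.rpow_nonneg (hx.le.trans hy.1) _) (by positivity)
    have hmvt := (convex_Icc x (x + 1)).norm_image_sub_le_of_norm_hasDerivWithin_le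
      (fun y hy => (hasDerivAt_cpowDiff k s (hx.trans_le hy.1)).hasDerivWithinAt) hderiv
      (show x + 1 ∈ Set.Icc x (x + 1) by simp) (show x ∈ Set.Icc x (x + 1) by simp)
    calc ‖cpowDiff k s x - cpowDiff k s (x + 1)‖
        ≤ ‖s‖ * ((‖s‖ + (k + 1 : ℕ)) ^ k * x ^ (-s.re - (k + 1 : ℕ))) := by
          simpa using hmvt
      _ ≤ (‖s‖ + (k + 1 : ℕ)) * ((‖s‖ + (k + 1 : ℕ)) ^ k * x ^ (-s.re - (k + 1 : ℕ))) := by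
          gcongr
          linarith [(k + 1 : ℕ).cast_nonneg (α := ℝ)]
      _ = (‖s‖ + (k + 1 : ℕ)) ^ (k + 1) * x ^ (-s.re - (k + 1 : ℕ)) := by ring

lemma summable_add_natCast_rpow {p : ℝ} (hp : p < -1) (X : ℕ) :
    Summable fun n : ℕ => ((X + n : ℕ) : ℝ) ^ p := by
  simpa only [add_comm] using (summable_nat_add_iff X).mpr (Real.summable_nat_rpow.mpr hp)

lemma norm_neg_one_pow_mul (n : ℕ) (z : ℂ) : ‖(-1) ^ n * z‖ = ‖z‖ := by
  simp

lemma summable_altSum {k : ℕ} {s : ℂ} {X : ℕ} (hX : X ≠ 0) (hs : 0 ≤ s.re)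
    (hk : 1 < s.re + k) : Summable fun n : ℕ => (-1) ^ n * cpowDiff k s (X + n : ℕ) := by
  refine Summable.of_norm_bounded
    ((summable_add_natCast_rpow (p := -s.re - k) (by linarith) X).mul_left ((‖s‖ + k) ^ k))
    fun n => ?_
  rw [norm_neg_one_pow_mul]
  exact norm_cpowDiff_le k (by positivity) hs

lemma altSum_eq_sub_altSum_add_one {k : ℕ} {s : ℂ} {X : ℕ} (hX : X ≠ 0) (hs : 0 ≤ s.re)
    (hk : 1 < s.re + k) : altSum k s X = cpowDiff k s X - altSum k s (X + 1) := by
  rw [altSum, (summable_altSum hX hs hk).tsum_eq_zero_add, altSum, sub_eq_add_neg, ← tsum_neg]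
  simp only [add_zero, pow_zero, one_mul, pow_succ, mul_neg_one, neg_mul, add_assoc,
    add_comm 1]

lemma altSum_succ {k : ℕ} {s : ℂ} {X : ℕ} (hX : X ≠ 0) (hs : 0 ≤ s.re) (hk : 1 < s.re + k) :
    altSum (k + 1) s X = 2 * altSum k s X - cpowDiff k s X := by
  have hsub : altSum (k + 1) s X = altSum k s X - altSum k s (X + 1) := by
    rw [altSum, altSum, altSum,
      ← (summable_altSum hX hs hk).tsum_sub (summable_altSum X.succ_ne_zero hs hk)]
    refine tsum_congr fun n => ?_
    rw [cpowDiff, mul_sub, ← Nat.cast_add_one, Nat.add_right_comm]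
  rw [hsub]
  linear_combination -altSum_eq_sub_altSum_add_one hX hs hk

lemma etaTail_eq_sub_etaTail_add_one {s : ℂ} (hs : 0 < s.re) {X : ℕ} (hX : X ≠ 0) :
    etaTail s X = (X : ℂ) ^ (-s) - etaTail s (X + 1) := by
  rw [etaTail, altSum_eq_sub_altSum_add_one hX hs.le (by push_cast; linarith), etaTail]
  simp only [cpowDiff]
  push_cast
  ring

lemma etaTail_one_eq_sum_add {s : ℂ} (hs : 0 < s.re) (X : ℕ) :
    etaTail s 1 = ∑ n ∈ Finset.Icc 1 X, (-1) ^ (n - 1) * (n : ℂ) ^ (-s) +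
      (-1) ^ X * etaTail s (X + 1) := by
  induction X with
  | zero => simp
  | succ X ih =>
    rw [ih, Finset.sum_Icc_succ_top (by lia),
      etaTail_eq_sub_etaTail_add_one hs X.succ_ne_zero, Nat.add_sub_cancel]
    ring

/-- The Euler transformation, carried to order `k`. -/
lemma etaTail_eq_sum_cpowDiff_add {s : ℂ} (hs : 0 < s.re) {X : ℕ} (hX : X ≠ 0) (k : ℕ) :
    etaTail s X = ∑ j ∈ Finset.range (k + 1), (1 / 2) ^ (j + 1) * cpowDiff j s X +
      (1 / 2) ^ (k + 1) * altSum (k + 1) s X := by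
  induction k with
  | zero =>
    simp only [etaTail, zero_add, Finset.sum_range_one, pow_one]
    ring
  | succ k ih =>
    rw [ih, Finset.sum_range_succ _ (k + 1), altSum_succ (k := k + 1) hX hs.le
      (by push_cast; linarith [k.cast_nonneg (α := ℝ)])]
    ring

lemma norm_altSum_le {k : ℕ} {s : ℂ} {X : ℕ} (hX : X ≠ 0) (hs : 0 ≤ s.re) (hk : 2 ≤ k) :
    ‖altSum k s X‖ ≤ 2 * ((‖s‖ + k) ^ k * (X : ℝ) ^ (2 - k : ℝ)) := by
  have hk' : (2 : ℝ) ≤ k := by exact_mod_cast hk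
  have hzeta : HasSum (fun n : ℕ => 1 / ((n + 1 : ℕ) : ℝ) ^ 2) (Real.pi ^ 2 / 6) := by
    simpa using (hasSum_nat_add_iff' 1).mpr hasSum_zeta_two
  have hterm (n : ℕ) : ‖(-1) ^ n * cpowDiff k s (X + n : ℕ)‖ ≤
      1 / ((n + 1 : ℕ) : ℝ) ^ 2 * ((‖s‖ + k) ^ k * (X : ℝ) ^ (2 - k : ℝ)) := by
    have hXn : (0 : ℝ) < ((X + n : ℕ) : ℝ) := by positivity
    rw [norm_neg_one_pow_mul]
    calc ‖cpowDiff k s (X + n : ℕ)‖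
        ≤ (‖s‖ + k) ^ k * ((X + n : ℕ) : ℝ) ^ (-s.re - k) := norm_cpowDiff_le k hXn hs
      _ ≤ (‖s‖ + k) ^ k * ((X + n : ℕ) : ℝ) ^ (-(2 : ℕ) + (2 - k) : ℝ) := by
          gcongr
          · exact_mod_cast (by lia : 1 ≤ X + n)
          · push_cast
            linarith
      _ = (‖s‖ + k) ^ k * (1 / ((X + n : ℕ) : ℝ) ^ 2 * ((X + n : ℕ) : ℝ) ^ (2 - k : ℝ)) := by
          rw [Real.rpow_add hXn, Real.rpow_neg hXn.le, Real.rpow_natCast, one_div]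
      _ ≤ (‖s‖ + k) ^ k * (1 / ((n + 1 : ℕ) : ℝ) ^ 2 * (X : ℝ) ^ (2 - k : ℝ)) := by
          gcongr ?_ * (1 / ?_ ^ 2 * ?_)
          · exact_mod_cast (by lia : n + 1 ≤ X + n)
          · exact Real.rpow_le_rpow_of_nonpos (by positivity)
              (by exact_mod_cast X.le_add_right n) (by linarith)
      _ = 1 / ((n + 1 : ℕ) : ℝ) ^ 2 * ((‖s‖ + k) ^ k * (X : ℝ) ^ (2 - k : ℝ)) := by ring
  refine (tsum_of_norm_bounded (hzeta.mul_right _) hterm).trans ?_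
  gcongr
  nlinarith [Real.pi_lt_d2, Real.pi_pos]

lemma norm_one_half_pow_mul_le (n : ℕ) (z : ℂ) : ‖(1 / 2 : ℂ) ^ n * z‖ ≤ ‖z‖ := by
  rw [norm_mul, norm_pow]
  exact mul_le_of_le_one_left (norm_nonneg z) (pow_le_one₀ (norm_nonneg _) (by norm_num))

lemma norm_etaTail_le {s : ℂ} (hs : 0 < s.re) {X k : ℕ} (hk : k ≠ 0)
    (hX : ‖s‖ + (k + 1) ≤ X) :
    ‖etaTail s X‖ ≤ (k + 1) * (X : ℝ) ^ (-s.re) +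
      2 * (((‖s‖ + (k + 1)) / X) ^ (k + 1) * (X : ℝ) ^ 2) := by
  have hX0 : (0 : ℝ) < X := by linarith [norm_nonneg s, k.cast_nonneg (α := ℝ)]
  have hXne : X ≠ 0 := by exact_mod_cast hX0.ne'
  rw [etaTail_eq_sum_cpowDiff_add hs hXne k]
  have hdiff (j : ℕ) (hj : j ∈ Finset.range (k + 1)) :
      ‖(1 / 2 : ℂ) ^ (j + 1) * cpowDiff j s X‖ ≤ (X : ℝ) ^ (-s.re) := by
    have hjk : (j : ℝ) ≤ k + 1 := by exact_mod_cast (Finset.mem_range.mp hj).le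
    calc ‖(1 / 2 : ℂ) ^ (j + 1) * cpowDiff j s X‖
        ≤ ‖cpowDiff j s X‖ := norm_one_half_pow_mul_le _ _
      _ ≤ (‖s‖ + j) ^ j * (X : ℝ) ^ (-s.re - j) := norm_cpowDiff_le j hX0 hs.le
      _ = ((‖s‖ + j) / X) ^ j * (X : ℝ) ^ (-s.re) := by
          rw [Real.rpow_sub hX0, Real.rpow_natCast, div_pow]
          ring
      _ ≤ (X : ℝ) ^ (-s.re) := by
          refine mul_le_of_le_one_left (by positivity) (pow_le_one₀ (by positivity) ?_)
          rw [div_le_one hX0]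
          linarith
  have hsum : ‖∑ j ∈ Finset.range (k + 1), (1 / 2 : ℂ) ^ (j + 1) * cpowDiff j s X‖ ≤
      (k + 1) * (X : ℝ) ^ (-s.re) := by
    simpa using (norm_sum_le _ _).trans (Finset.sum_le_sum hdiff)
  have hrest := (norm_one_half_pow_mul_le (k + 1) (altSum (k + 1) s X)).trans
    (norm_altSum_le hXne hs.le (by lia : 2 ≤ k + 1))
  refine (norm_add_le _ _).trans (add_le_add hsum (hrest.trans_eq ?_))
  rw [Real.rpow_sub hX0, Real.rpow_natCast, div_pow, Real.rpow_two]
  push_cast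
  ring

lemma differentiableAt_natCast_cpow_neg {n : ℕ} (hn : n ≠ 0) (s : ℂ) :
    DifferentiableAt ℂ (fun s => (n : ℂ) ^ (-s)) s :=
  differentiableAt_id.neg.const_cpow (Or.inl (Nat.cast_ne_zero.mpr hn))

lemma differentiableAt_altSum_one {s : ℂ} (hs : 0 < s.re) :
    DifferentiableAt ℂ (fun s => altSum 1 s 1) s := by
  let U : Set ℂ := {w | s.re / 2 < w.re} ∩ Metric.ball s 1
  have hU : IsOpen U := (isOpen_lt continuous_const continuous_re).inter Metric.isOpen_ball
  have hsU : s ∈ U := ⟨half_lt_self hs, Metric.mem_ball_self one_pos⟩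
  have hsummable :
      Summable fun n : ℕ => (‖s‖ + 2) * ((1 + n : ℕ) : ℝ) ^ (-(s.re / 2) - 1) :=
    (summable_add_natCast_rpow (by linarith) 1).mul_left _
  have hdiff (n : ℕ) :
      DifferentiableOn ℂ (fun s => (-1) ^ n * cpowDiff 1 s (1 + n : ℕ)) U := by
    refine DifferentiableOn.const_mul (fun w _ => DifferentiableAt.differentiableWithinAt ?_) _
    simp only [cpowDiff]
    exact_mod_cast (differentiableAt_natCast_cpow_neg (n := 1 + n) (by lia) w).sub
      (differentiableAt_natCast_cpow_neg (n := 1 + n + 1) (by lia) w)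
  refine (differentiableOn_tsum_of_summable_norm hsummable hdiff hU
    fun n w hw => ?_).differentiableAt (hU.mem_nhds hsU)
  have hwre : s.re / 2 < w.re := hw.1
  have hwnorm : ‖w‖ ≤ ‖s‖ + 1 := by
    linarith [norm_le_norm_add_norm_sub' w s, mem_ball_iff_norm.mp hw.2]
  rw [norm_neg_one_pow_mul]
  refine (norm_cpowDiff_le 1 (by positivity) (by linarith)).trans ?_
  rw [pow_one, Nat.cast_one]
  gcongr ?_ * (_ : ℝ) ^ ?_
  · linarith
  · exact_mod_cast Nat.le_add_right 1 n
  · linarith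

/-- Twice the sum over even `n` has to be removed from `ζ(s)`. -/
lemma altSum_zero_one_eq {s : ℂ} (hs : 1 < s.re) :
    altSum 0 s 1 = (1 - 2 ^ (1 - s)) * riemannZeta s := by
  have hzeta := zeta_eq_tsum_one_div_nat_add_one_cpow hs
  let f : ℕ → ℂ := fun n => 1 / ((n : ℂ) + 1) ^ s
  have hf : Summable f := by
    simpa [f] using (summable_nat_add_iff 1).mpr (Complex.summable_one_div_nat_cpow.mpr hs)
  have hfe : Summable fun n => f (2 * n) := hf.comp_injective (mul_right_injective₀ two_ne_zero)
  have hfo : Summable fun n => f (2 * n + 1) := hf.comp_injective fun a b h => by lia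
  have hterm (n : ℕ) : cpowDiff 0 s (1 + n : ℕ) = f n := by
    simp [cpowDiff, f, Complex.cpow_neg, add_comm]
  have halt : altSum 0 s 1 = ∑' n, f (2 * n) - ∑' n, f (2 * n + 1) := by
    have hsplit := tsum_even_add_odd (f := fun n => (-1) ^ n * f n)
      (by simpa using hfe) (by simpa [pow_succ] using hfo.neg)
    simp only [altSum, hterm, ← hsplit]
    simp [pow_succ, tsum_neg, sub_eq_add_neg]
  have hodd : ∑' n, f (2 * n + 1) = 2 ^ (-s) * riemannZeta s := by
    rw [hzeta, ← tsum_mul_left]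
    refine tsum_congr fun n => ?_
    have hcast : (((2 * n + 1 : ℕ) : ℂ) + 1) = ((2 : ℝ) : ℂ) * (((n : ℝ) + 1 : ℝ) : ℂ) := by
      push_cast
      ring
    simp only [f]
    rw [hcast, Complex.mul_cpow_ofReal_nonneg zero_le_two (by positivity), Complex.cpow_neg]
    push_cast
    rw [one_div, one_div, mul_inv]
  have hsplit : ∑' n, f (2 * n) + ∑' n, f (2 * n + 1) = riemannZeta s := by
    rw [tsum_even_add_odd hfe hfo, hzeta]
  have htwo : (2 : ℂ) ^ (1 - s) = 2 * 2 ^ (-s) := by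
    rw [sub_eq_add_neg, Complex.cpow_add _ _ two_ne_zero, Complex.cpow_one]
  rw [halt, htwo]
  linear_combination hsplit - 2 * hodd

lemma etaTail_one_of_one_lt_re {s : ℂ} (hs : 1 < s.re) :
    etaTail s 1 = (1 - 2 ^ (1 - s)) * riemannZeta s := by
  rw [← altSum_zero_one_eq hs, etaTail,
    altSum_succ one_ne_zero (by linarith) (by simpa using hs)]
  ring

/-- Analytic continuation from `Re s > 1` around the pole at `1`, through the upper half-plane. -/
lemma etaTail_one_eq {s : ℂ} (hs : 0 < s.re) (hs1 : s.re < 1) :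
    etaTail s 1 = (1 - 2 ^ (1 - s)) * riemannZeta s := by
  let U₁ : Set ℂ := {w | 0 < w.re} ∩ {w | w.re < 1}
  let U₂ : Set ℂ := {w | 0 < w.re} ∩ {w | 0 < w.im}
  let U₃ : Set ℂ := {w | 1 < w.re}
  have hconn : IsPreconnected (U₁ ∪ U₂ ∪ U₃) := by
    refine .union (2 + I) ?_ (by simp [U₃]) (.union (1 / 2 + I) ?_ (by simp [U₂]) ?_ ?_) ?_
    · exact Or.inr (by simp [U₂])
    · norm_num [U₁]
    · exact ((convex_halfSpace_re_gt 0).inter (convex_halfSpace_re_lt 1)).isPreconnected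
    · exact ((convex_halfSpace_re_gt 0).inter (convex_halfSpace_im_gt 0)).isPreconnected
    · exact (convex_halfSpace_re_gt 1).isPreconnected
  have hre {a : ℝ} : IsOpen {w : ℂ | a < w.re} := isOpen_lt continuous_const continuous_re
  have hopen : IsOpen (U₁ ∪ U₂ ∪ U₃) :=
    ((hre.inter (isOpen_lt continuous_re continuous_const)).union
      (hre.inter (isOpen_lt continuous_const continuous_im))).union hre
  have hU : ∀ w ∈ U₁ ∪ U₂ ∪ U₃, 0 < w.re ∧ w ≠ 1 := by
    rintro w ((⟨h0, h1⟩ | ⟨h0, h1⟩) | h1)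
    · exact ⟨h0, by rintro rfl; simp at h1⟩
    · exact ⟨h0, by rintro rfl; simp at h1⟩
    · exact ⟨one_pos.trans h1, by rintro rfl; simp [U₃] at h1⟩
  have hf : AnalyticOnNhd ℂ (fun w => etaTail w 1) (U₁ ∪ U₂ ∪ U₃) := by
    refine DifferentiableOn.analyticOnNhd (fun w hw => ?_) hopen
    refine (DifferentiableAt.div_const ?_ 2).differentiableWithinAt
    exact (differentiableAt_natCast_cpow_neg one_ne_zero w).add
      (differentiableAt_altSum_one (hU w hw).1)
  have hg : AnalyticOnNhd ℂ (fun w => (1 - 2 ^ (1 - w)) * riemannZeta w) (U₁ ∪ U₂ ∪ U₃) := by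
    refine DifferentiableOn.analyticOnNhd (fun w hw => ?_) hopen
    exact (((differentiableAt_id.const_sub 1).const_cpow (Or.inl two_ne_zero)).const_sub 1
      |>.mul (differentiableAt_riemannZeta (hU w hw).2)).differentiableWithinAt
  have h2 : (2 : ℂ) ∈ U₃ := by simp [U₃]
  refine hf.eqOn_of_preconnected_of_eventuallyEq hg hconn (Or.inr h2) ?_ (Or.inl (Or.inl ⟨hs, hs1⟩))
  filter_upwards [hre.mem_nhds h2] with w hw using etaTail_one_of_one_lt_re hw

/-! ### Mean squares of Dirichlet polynomials -/

lemma integral_mul_norm_sum_exp_sq_le {ι : Type*} (S : Finset ι) (b : ι → ℂ) (ω : ι → ℝ)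
    {F : ℝ → ℝ} (hF : Continuous F) (A B : ℝ) :
    ∫ u in A..B, F u * ‖∑ n ∈ S, b n * cexp (I * ω n * u)‖ ^ 2 ≤
      ∑ m ∈ S, ∑ n ∈ S,
        ‖b m‖ * ‖b n‖ * ‖∫ u in A..B, (F u : ℂ) * cexp (I * (ω m - ω n : ℝ) * u)‖ := by
  have hexp (m n : ι) (u : ℝ) : cexp (I * (ω m - ω n : ℝ) * u) =
      cexp (I * ω m * u) * (starRingEnd ℂ) (cexp (I * ω n * u)) := by
    rw [← Complex.exp_conj, ← Complex.exp_add]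
    simp only [map_mul, conj_I, conj_ofReal, ofReal_sub]
    ring_nf
  have hexpand (u : ℝ) : ((F u * ‖∑ n ∈ S, b n * cexp (I * ω n * u)‖ ^ 2 : ℝ) : ℂ) =
      ∑ m ∈ S, ∑ n ∈ S, b m * (starRingEnd ℂ) (b n) *
        ((F u : ℂ) * cexp (I * (ω m - ω n : ℝ) * u)) := by
    rw [ofReal_mul, ofReal_pow, ← Complex.mul_conj', map_sum, Finset.sum_mul_sum, Finset.mul_sum]
    refine Finset.sum_congr rfl fun m _ => ?_
    rw [Finset.mul_sum]
    refine Finset.sum_congr rfl fun n _ => ?_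
    rw [hexp, map_mul]
    ring
  have hintegral : ((∫ u in A..B, F u * ‖∑ n ∈ S, b n * cexp (I * ω n * u)‖ ^ 2 : ℝ) : ℂ) =
      ∑ m ∈ S, ∑ n ∈ S, b m * (starRingEnd ℂ) (b n) *
        ∫ u in A..B, (F u : ℂ) * cexp (I * (ω m - ω n : ℝ) * u) := by
    rw [← intervalIntegral.integral_ofReal, intervalIntegral.integral_congr fun u _ => hexpand u,
      intervalIntegral.integral_finsetSum fun m _ => by
        apply Continuous.intervalIntegrable; fun_prop]
    refine Finset.sum_congr rfl fun m _ => ?_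
    rw [intervalIntegral.integral_finsetSum fun n _ => by
        apply Continuous.intervalIntegrable; fun_prop]
    simp only [intervalIntegral.integral_const_mul]
  refine (Real.le_norm_self _).trans ?_
  rw [← Complex.norm_real, hintegral]
  refine (norm_sum_le _ _).trans (Finset.sum_le_sum fun m _ => (norm_sum_le _ _).trans
    (Finset.sum_le_sum fun n _ => ?_))
  rw [norm_mul, norm_mul, RCLike.norm_conj]

lemma norm_integral_exp_le {l : ℝ} (hl : l ≠ 0) (A B : ℝ) :
    ‖∫ u in A..B, cexp (I * l * u)‖ ≤ 2 * |l|⁻¹ := by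
  have hunit (x : ℝ) : ‖cexp (I * l * x)‖ = 1 := by
    rw [mul_assoc, ← ofReal_mul, norm_exp_I_mul_ofReal]
  rw [integral_exp_mul_complex (mul_ne_zero I_ne_zero (ofReal_ne_zero.mpr hl)), norm_div, norm_mul,
    norm_I, one_mul, Complex.norm_real, Real.norm_eq_abs, div_eq_mul_inv]
  gcongr
  refine (norm_sub_le _ _).trans ?_
  rw [hunit, hunit, one_add_one_eq_two]

lemma exists_sum_rpow_neg_le {p : ℝ} (hp : 1 < p) :
    ∃ C : ℝ, 0 ≤ C ∧ ∀ q ≤ p, ∀ X : ℕ,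
      ∑ n ∈ Finset.Icc 1 X, (n : ℝ) ^ (-q) ≤ C * (X : ℝ) ^ (p - q) := by
  refine ⟨∑' n : ℕ, (n : ℝ) ^ (-p), tsum_nonneg fun n => by positivity, fun q hq X => ?_⟩
  have hsummable : Summable fun n : ℕ => (n : ℝ) ^ (-p) :=
    Real.summable_nat_rpow.mpr (by linarith)
  calc ∑ n ∈ Finset.Icc 1 X, (n : ℝ) ^ (-q)
      ≤ ∑ n ∈ Finset.Icc 1 X, (n : ℝ) ^ (-p) * (X : ℝ) ^ (p - q) := by
        refine Finset.sum_le_sum fun n hn => ?_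
        obtain ⟨hn, hnX⟩ := Finset.mem_Icc.mp hn
        rw [show -q = -p + (p - q) by ring, Real.rpow_add (by exact_mod_cast hn)]
        gcongr
    _ ≤ _ := by
        rw [← Finset.sum_mul]
        gcongr
        exact hsummable.sum_le_tsum _ fun n _ => by positivity

lemma inv_abs_log_sub_log_le {x y : ℝ} (hx : 0 < x) (hxy : x < y) :
    |Real.log x - Real.log y|⁻¹ ≤ 1 + x * |x - y|⁻¹ := by
  have hy := hx.trans hxy
  have hpos : 0 < y - x := sub_pos.mpr hxy
  have hlog : (y - x) / y ≤ Real.log y - Real.log x := by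
    have := Real.one_sub_inv_le_log_of_pos (div_pos hy hx)
    rwa [inv_div, Real.log_div hy.ne' hx.ne', one_sub_div hy.ne'] at this
  rw [abs_sub_comm, abs_sub_comm x, abs_of_pos hpos, abs_of_pos ((div_pos hpos hy).trans_le hlog)]
  calc (Real.log y - Real.log x)⁻¹ ≤ ((y - x) / y)⁻¹ := by gcongr
    _ = 1 + x * (y - x)⁻¹ := by
        field_simp
        ring

/-- No case distinction is needed on the diagonal, where `0⁻¹ = 0`. -/
lemma rpow_mul_inv_abs_log_sub_log_le {x y σ : ℝ} (hx : 0 < x) (hy : 0 < y) (hσ : 0 ≤ σ) :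
    x ^ (-σ) * y ^ (-σ) * |Real.log x - Real.log y|⁻¹ ≤ x ^ (-σ) * y ^ (-σ) +
      (x ^ (-(2 * σ - 1)) + y ^ (-(2 * σ - 1))) * |x - y|⁻¹ := by
  wlog hxy : x ≤ y generalizing x y
  · convert this hy hx (le_of_not_ge hxy) using 1
    · rw [mul_comm (x ^ _), abs_sub_comm]
    · rw [mul_comm (x ^ _), abs_sub_comm, add_comm (x ^ _)]
  obtain rfl | hlt := hxy.eq_or_lt
  · simp only [sub_self, abs_zero, inv_zero, mul_zero, add_zero]
    positivity
  have hpow : x ^ (-σ) * y ^ (-σ) * x ≤ x ^ (-(2 * σ - 1)) := by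
    have hmono := Real.rpow_le_rpow_of_nonpos hx hxy (neg_nonpos.mpr hσ)
    calc x ^ (-σ) * y ^ (-σ) * x ≤ x ^ (-σ) * x ^ (-σ) * x ^ (1 : ℝ) := by
          rw [Real.rpow_one]
          gcongr
      _ = x ^ (-(2 * σ - 1)) := by
          rw [← Real.rpow_add hx, ← Real.rpow_add hx]
          ring_nf
  calc x ^ (-σ) * y ^ (-σ) * |Real.log x - Real.log y|⁻¹
      ≤ x ^ (-σ) * y ^ (-σ) * (1 + x * |x - y|⁻¹) := by
        gcongr
        exact inv_abs_log_sub_log_le hx hlt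
    _ = x ^ (-σ) * y ^ (-σ) + x ^ (-σ) * y ^ (-σ) * x * |x - y|⁻¹ := by ring
    _ ≤ _ := by
        gcongr
        exact hpow.trans (le_add_of_nonneg_right (by positivity))

lemma sum_inv_abs_sub_le {m X : ℕ} (hm : m ∈ Finset.Icc 1 X) :
    ∑ n ∈ Finset.Icc 1 X, |(m : ℝ) - n|⁻¹ ≤ 2 * ∑ j ∈ Finset.Icc 1 X, (j : ℝ)⁻¹ := by
  have hterm (n : ℕ) : |(m : ℝ) - n|⁻¹ =
      (if m < n then ((n - m : ℕ) : ℝ)⁻¹ else 0) + if n < m then ((m - n : ℕ) : ℝ)⁻¹ else 0 := by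
    rcases lt_trichotomy m n with h | rfl | h
    · rw [if_pos h, if_neg h.not_gt, add_zero, Nat.cast_sub h.le, abs_sub_comm,
        abs_of_pos (sub_pos.mpr (by exact_mod_cast h))]
    · simp
    · rw [if_pos h, if_neg h.not_gt, zero_add, Nat.cast_sub h.le,
        abs_of_pos (sub_pos.mpr (by exact_mod_cast h))]
  have hinj {S : Finset ℕ} {g : ℕ → ℕ} (hg : Set.InjOn g S) (hS : ∀ n ∈ S, g n ∈ Finset.Icc 1 X) :
      ∑ n ∈ S, (g n : ℝ)⁻¹ ≤ ∑ j ∈ Finset.Icc 1 X, (j : ℝ)⁻¹ := by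
    rw [← Finset.sum_image (f := fun j : ℕ => (j : ℝ)⁻¹) hg]
    exact Finset.sum_le_sum_of_subset_of_nonneg (Finset.image_subset_iff.mpr hS)
      fun j _ _ => by positivity
  simp only [hterm, Finset.sum_add_distrib, ← Finset.sum_filter, two_mul]
  rw [Finset.mem_Icc] at hm
  refine add_le_add (hinj ?_ ?_) (hinj ?_ ?_)
  all_goals
    simp only [Set.InjOn, SetLike.mem_coe, Finset.mem_filter, Finset.mem_Icc]
    lia

lemma sum_add_mul_inv_abs_sub_le {f : ℕ → ℝ} (hf : ∀ n, 0 ≤ f n) (X : ℕ) :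
    ∑ m ∈ Finset.Icc 1 X, ∑ n ∈ Finset.Icc 1 X, (f m + f n) * |(m : ℝ) - n|⁻¹ ≤
      4 * (∑ m ∈ Finset.Icc 1 X, f m) * ∑ j ∈ Finset.Icc 1 X, (j : ℝ)⁻¹ := by
  have hleft : ∑ m ∈ Finset.Icc 1 X, ∑ n ∈ Finset.Icc 1 X, f m * |(m : ℝ) - n|⁻¹ ≤
      (∑ m ∈ Finset.Icc 1 X, f m) * (2 * ∑ j ∈ Finset.Icc 1 X, (j : ℝ)⁻¹) := by
    rw [Finset.sum_mul]
    refine Finset.sum_le_sum fun m hm => ?_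
    rw [← Finset.mul_sum]
    exact mul_le_mul_of_nonneg_left (sum_inv_abs_sub_le hm) (hf m)
  have hsymm : ∑ m ∈ Finset.Icc 1 X, ∑ n ∈ Finset.Icc 1 X, f n * |(m : ℝ) - n|⁻¹ =
      ∑ m ∈ Finset.Icc 1 X, ∑ n ∈ Finset.Icc 1 X, f m * |(m : ℝ) - n|⁻¹ := by
    rw [Finset.sum_comm]
    simp only [abs_sub_comm]
  simp only [add_mul, Finset.sum_add_distrib, hsymm]
  linarith

lemma exists_sum_mul_inv_abs_log_sub_log_le {σ p : ℝ} (hσ : 0 ≤ σ) (hσ1 : σ ≤ 1)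
    (hp : 2 - 2 * σ < p) :
    ∃ C : ℝ, 0 ≤ C ∧ ∀ X : ℕ, X ≠ 0 → ∑ m ∈ Finset.Icc 1 X, ∑ n ∈ Finset.Icc 1 X,
      (m : ℝ) ^ (-σ) * (n : ℝ) ^ (-σ) * |Real.log m - Real.log n|⁻¹ ≤ C * (X : ℝ) ^ p := by
  set q := p / 2 + σ with hq
  obtain ⟨C, hC0, hC⟩ := exists_sum_rpow_neg_le (p := q) (by linarith)
  refine ⟨5 * C ^ 2, by positivity, fun X hX => ?_⟩
  have hX0 : (0 : ℝ) < X := by positivity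
  have hharm : ∑ j ∈ Finset.Icc 1 X, (j : ℝ)⁻¹ ≤ C * (X : ℝ) ^ (q - 1) := by
    simpa only [Real.rpow_neg_one] using hC 1 (by linarith) X
  have hsq : (X : ℝ) ^ (q - σ) * (X : ℝ) ^ (q - σ) = (X : ℝ) ^ p := by
    rw [← Real.rpow_add hX0, hq]
    ring_nf
  have hmul : (X : ℝ) ^ (q - (2 * σ - 1)) * (X : ℝ) ^ (q - 1) = (X : ℝ) ^ p := by
    rw [← Real.rpow_add hX0, hq]
    ring_nf
  calc _ ≤ ∑ m ∈ Finset.Icc 1 X, ∑ n ∈ Finset.Icc 1 X, ((m : ℝ) ^ (-σ) * (n : ℝ) ^ (-σ) +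
        ((m : ℝ) ^ (-(2 * σ - 1)) + (n : ℝ) ^ (-(2 * σ - 1))) * |(m : ℝ) - n|⁻¹) := by
        refine Finset.sum_le_sum fun m hm => Finset.sum_le_sum fun n hn => ?_
        exact rpow_mul_inv_abs_log_sub_log_le (by exact_mod_cast (Finset.mem_Icc.mp hm).1)
          (by exact_mod_cast (Finset.mem_Icc.mp hn).1) hσ
    _ ≤ (∑ n ∈ Finset.Icc 1 X, (n : ℝ) ^ (-σ)) * (∑ n ∈ Finset.Icc 1 X, (n : ℝ) ^ (-σ)) +
        4 * (∑ n ∈ Finset.Icc 1 X, (n : ℝ) ^ (-(2 * σ - 1))) *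
          ∑ j ∈ Finset.Icc 1 X, (j : ℝ)⁻¹ := by
        simp only [Finset.sum_add_distrib, ← Finset.sum_mul_sum]
        gcongr
        exact sum_add_mul_inv_abs_sub_le (f := fun n => (n : ℝ) ^ (-(2 * σ - 1)))
          (fun n => by positivity) X
    _ ≤ (C * (X : ℝ) ^ (q - σ)) * (C * (X : ℝ) ^ (q - σ)) +
        4 * (C * (X : ℝ) ^ (q - (2 * σ - 1))) * (C * (X : ℝ) ^ (q - 1)) := by
        gcongr
        · exact hC σ (by linarith) X
        · exact hC σ (by linarith) X
        · exact hC _ (by linarith) X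
    _ = 5 * C ^ 2 * (X : ℝ) ^ p := by linear_combination C ^ 2 * hsq + 4 * C ^ 2 * hmul

lemma natCast_cpow_neg_mul_I {n : ℕ} (hn : n ≠ 0) (u : ℝ) :
    (n : ℂ) ^ (-(u * I)) = cexp (I * (-Real.log n : ℝ) * u) := by
  rw [Complex.cpow_def_of_ne_zero (Nat.cast_ne_zero.mpr hn), ofReal_neg, ofReal_log n.cast_nonneg,
    ofReal_natCast]
  ring_nf

lemma norm_integral_exp_log_sub_log_le {m n : ℕ} (hm : m ≠ 0) (hn : n ≠ 0) {T : ℝ} (hT : 0 ≤ T) :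
    ‖∫ u in (-T)..T, cexp (I * (-Real.log m - -Real.log n : ℝ) * u)‖ ≤
      (if m = n then 2 * T else 0) + 2 * |Real.log m - Real.log n|⁻¹ := by
  split_ifs with h
  · subst h
    simp only [sub_self, ofReal_zero, mul_zero, zero_mul, Complex.exp_zero,
      intervalIntegral.integral_const, sub_neg_eq_add, norm_smul, Real.norm_eq_abs, norm_one,
      mul_one, abs_zero, inv_zero, add_zero, ← two_mul]
    rw [abs_of_nonneg (by positivity)]
  · have hlog : Real.log m ≠ Real.log n := fun heq => h <| by
      exact_mod_cast Real.log_injOn_pos (Set.mem_Ioi.mpr (by positivity : (0 : ℝ) < m))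
        (Set.mem_Ioi.mpr (by positivity : (0 : ℝ) < n)) heq
    have hbound := norm_integral_exp_le (l := -Real.log m - -Real.log n)
      (fun h0 => hlog (by linarith)) (-T) T
    rwa [neg_sub_neg, abs_sub_comm, ← neg_sub_neg, ← zero_add (2 * _)] at hbound

lemma norm_mul_norm_mul_norm_integral_exp_le {σ : ℝ} {b : ℕ → ℂ}
    (hb : ∀ n, ‖b n‖ ≤ (n : ℝ) ^ (-σ)) {m n : ℕ} (hm : m ≠ 0) (hn : n ≠ 0) {T : ℝ} (hT : 0 ≤ T) :
    ‖b m‖ * ‖b n‖ * ‖∫ u in (-T)..T, cexp (I * (-Real.log m - -Real.log n : ℝ) * u)‖ ≤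
      (if m = n then 2 * T * (n : ℝ) ^ (-(2 * σ)) else 0) +
        2 * ((m : ℝ) ^ (-σ) * (n : ℝ) ^ (-σ) * |Real.log m - Real.log n|⁻¹) :=
  calc _ ≤ (m : ℝ) ^ (-σ) * (n : ℝ) ^ (-σ) *
        ((if m = n then 2 * T else 0) + 2 * |Real.log m - Real.log n|⁻¹) := by
        gcongr
        · exact hb m
        · exact hb n
        · exact norm_integral_exp_log_sub_log_le hm hn hT
    _ = _ := by
        split_ifs with h
        · rw [h, two_mul σ, neg_add, Real.rpow_add (by exact_mod_cast hn.bot_lt)]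
          ring
        · ring

lemma exists_integral_norm_sum_sq_le {σ p : ℝ} (hσ : 0 ≤ σ) (hσ1 : σ ≤ 1) (hp : 2 - 2 * σ < p) :
    ∃ C : ℝ, 0 ≤ C ∧ ∀ b : ℕ → ℂ, (∀ n, ‖b n‖ ≤ (n : ℝ) ^ (-σ)) → ∀ Y X : ℕ, X ≠ 0 → ∀ T : ℝ,
      0 ≤ T → ∫ u in (-T)..T, ‖∑ n ∈ Finset.Ioc Y X, b n * (n : ℂ) ^ (-(u * I))‖ ^ 2 ≤
        2 * T * ∑ n ∈ Finset.Ioc Y X, (n : ℝ) ^ (-(2 * σ)) + C * (X : ℝ) ^ p := by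
  obtain ⟨C, hC0, hC⟩ := exists_sum_mul_inv_abs_log_sub_log_le hσ hσ1 hp
  refine ⟨2 * C, by positivity, fun b hb Y X hX T hT => ?_⟩
  have hne {n : ℕ} (hn : n ∈ Finset.Ioc Y X) : n ≠ 0 := by
    have := (Finset.mem_Ioc.mp hn).1
    lia
  have hsub : Finset.Ioc Y X ⊆ Finset.Icc 1 X := fun n hn =>
    Finset.mem_Icc.mpr ⟨Nat.one_le_iff_ne_zero.mpr (hne hn), (Finset.mem_Ioc.mp hn).2⟩
  set D : ℕ → ℕ → ℝ :=
    fun m n => (m : ℝ) ^ (-σ) * (n : ℝ) ^ (-σ) * |Real.log m - Real.log n|⁻¹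
  have hD0 (m n : ℕ) : 0 ≤ D m n := by positivity
  calc _ = ∫ u in (-T)..T, 1 * ‖∑ n ∈ Finset.Ioc Y X,
        b n * cexp (I * (-Real.log n : ℝ) * u)‖ ^ 2 := by
        refine intervalIntegral.integral_congr fun u _ => ?_
        simp only [one_mul]
        rw [Finset.sum_congr rfl fun n hn => by rw [natCast_cpow_neg_mul_I (hne hn)]]
    _ ≤ ∑ m ∈ Finset.Ioc Y X, ∑ n ∈ Finset.Ioc Y X,
        ((if m = n then 2 * T * (n : ℝ) ^ (-(2 * σ)) else 0) + 2 * D m n) := by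
        refine (integral_mul_norm_sum_exp_sq_le _ b _ continuous_const (-T) T).trans ?_
        simp only [ofReal_one, one_mul]
        exact Finset.sum_le_sum fun m hm => Finset.sum_le_sum fun n hn =>
          norm_mul_norm_mul_norm_integral_exp_le hb (hne hm) (hne hn) hT
    _ = 2 * T * ∑ n ∈ Finset.Ioc Y X, (n : ℝ) ^ (-(2 * σ)) +
        2 * ∑ m ∈ Finset.Ioc Y X, ∑ n ∈ Finset.Ioc Y X, D m n := by
        simp only [Finset.sum_add_distrib, Finset.sum_ite_eq, ← Finset.mul_sum,
          Finset.sum_ite_mem, Finset.inter_self]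
    _ ≤ _ := by
        rw [mul_assoc 2 C]
        gcongr
        refine le_trans ?_ (hC X hX)
        exact (Finset.sum_le_sum fun m _ => Finset.sum_le_sum_of_subset_of_nonneg hsub
          fun n _ _ => hD0 m n).trans (Finset.sum_le_sum_of_subset_of_nonneg hsub
            fun m _ _ => Finset.sum_nonneg fun n _ => hD0 m n)

/-! ### The mean square of the zeta function minus a partial sum -/

/-- The zeta function with the first `N` terms of its Dirichlet series removed. -/
noncomputable def zetaTail (N : ℕ) (s : ℂ) : ℂ :=
  riemannZeta s - ∑ n ∈ Finset.Icc 1 N, (n : ℂ) ^ (-s)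

lemma differentiableAt_zetaTail (N : ℕ) {s : ℂ} (hs : s ≠ 1) :
    DifferentiableAt ℂ (zetaTail N) s :=
  (differentiableAt_riemannZeta hs).sub <| DifferentiableAt.fun_sum fun _ hn =>
    differentiableAt_natCast_cpow_neg (Nat.one_le_iff_ne_zero.mp (Finset.mem_Icc.mp hn).1) s

lemma continuous_zetaTail_add_mul_I (N : ℕ) {s : ℂ} (hs : s.re ≠ 1) (β : ℝ) :
    Continuous fun u : ℝ => zetaTail N (s + (β * u : ℝ) * I) := by
  refine continuous_iff_continuousAt.mpr fun u => ContinuousAt.comp (g := zetaTail N)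
    (differentiableAt_zetaTail N fun h => hs ?_).continuousAt (by fun_prop)
  simpa using congrArg Complex.re h

lemma sum_neg_one_pow_mul_add (f : ℕ → ℂ) (Y : ℕ) :
    ∑ n ∈ Finset.Icc 1 (2 * Y), (-1) ^ (n - 1) * f n + 2 * ∑ n ∈ Finset.Icc 1 Y, f (2 * n) =
      ∑ n ∈ Finset.Icc 1 (2 * Y), f n := by
  induction Y with
  | zero => simp
  | succ Y ih =>
    simp only [mul_add_one, Finset.sum_Icc_succ_top (Nat.le_add_left 1 _), Nat.add_sub_cancel,
      ← ih, pow_succ, pow_mul]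
    ring

/-- The coefficients of the Dirichlet polynomial approximating
`(1 - 2 ^ (1 - s)) * zetaTail Y s`. -/
noncomputable def etaCoeff (Y n : ℕ) : ℂ := if n ≤ 2 * Y then 1 else (-1) ^ (n - 1)

lemma norm_etaCoeff (Y n : ℕ) : ‖etaCoeff Y n‖ = 1 := by
  unfold etaCoeff
  split_ifs <;> simp

lemma sum_neg_one_pow_mul_sub_add (f : ℕ → ℂ) {Y X : ℕ} (h : 2 * Y ≤ X) :
    ∑ n ∈ Finset.Icc 1 X, (-1) ^ (n - 1) * f n - ∑ n ∈ Finset.Icc 1 Y, f n +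
      2 * ∑ n ∈ Finset.Icc 1 Y, f (2 * n) = ∑ n ∈ Finset.Ioc Y X, etaCoeff Y n * f n := by
  have hIcc (b : ℕ) : Finset.Icc 1 b = Finset.Ioc 0 b := rfl
  have halt := sum_neg_one_pow_mul_add f Y
  simp only [hIcc] at halt ⊢
  rw [← Finset.sum_Ioc_consecutive _ (Nat.zero_le (2 * Y)) h,
    ← Finset.sum_Ioc_consecutive (fun n => etaCoeff Y n * f n) (by lia : Y ≤ 2 * Y) h]
  have hsmall : ∑ n ∈ Finset.Ioc Y (2 * Y), etaCoeff Y n * f n =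
      ∑ n ∈ Finset.Ioc Y (2 * Y), f n :=
    Finset.sum_congr rfl fun n hn => by
      rw [etaCoeff, if_pos (Finset.mem_Ioc.mp hn).2, one_mul]
  have hlarge : ∑ n ∈ Finset.Ioc (2 * Y) X, etaCoeff Y n * f n =
      ∑ n ∈ Finset.Ioc (2 * Y) X, (-1) ^ (n - 1) * f n :=
    Finset.sum_congr rfl fun n hn => by
      rw [etaCoeff, if_neg (Finset.mem_Ioc.mp hn).1.not_ge]
  have hsplit := Finset.sum_Ioc_consecutive f (Nat.zero_le Y) (by lia : Y ≤ 2 * Y)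
  rw [hsmall, hlarge]
  linear_combination halt - hsplit

lemma one_sub_two_cpow_mul_zetaTail {s : ℂ} (hs : 0 < s.re) (hs1 : s.re < 1) {Y X : ℕ}
    (h : 2 * Y ≤ X) :
    (1 - 2 ^ (1 - s)) * zetaTail Y s =
      ∑ n ∈ Finset.Ioc Y X, etaCoeff Y n * (n : ℂ) ^ (-s) + (-1) ^ X * etaTail s (X + 1) := by
  have heven : ∑ n ∈ Finset.Icc 1 Y, ((2 * n : ℕ) : ℂ) ^ (-s) =
      2 ^ (-s) * ∑ n ∈ Finset.Icc 1 Y, (n : ℂ) ^ (-s) := by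
    rw [Finset.mul_sum]
    refine Finset.sum_congr rfl fun n _ => ?_
    rw [Nat.cast_mul, Complex.natCast_mul_natCast_cpow, Nat.cast_ofNat]
  rw [zetaTail, mul_sub, ← etaTail_one_eq hs hs1, etaTail_one_eq_sum_add hs X,
    ← sum_neg_one_pow_mul_sub_add _ h, heven, sub_eq_add_neg 1 s,
    Complex.cpow_add _ _ two_ne_zero, Complex.cpow_one]
  ring

lemma two_rpow_sub_one_le_norm (s : ℂ) :
    (2 : ℝ) ^ (1 - s.re) - 1 ≤ ‖(1 : ℂ) - 2 ^ (1 - s)‖ := by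
  have hnorm : ‖(2 : ℂ) ^ (1 - s)‖ = (2 : ℝ) ^ (1 - s.re) := by
    simpa using Complex.norm_cpow_eq_rpow_re_of_pos two_pos (1 - s)
  rw [← hnorm, norm_sub_rev, ← norm_one (α := ℂ)]
  exact norm_sub_norm_le _ _

/-- On `|Im s| ≤ T` the tail of the alternating series is negligible from `T ^ (1 + η)` on, by the
Euler transformation of order `j + 1` with `2 < η * j`. -/
lemma eventually_norm_etaTail_le {η : ℝ} (hη : 0 < η) {ε : ℝ} (hε : 0 < ε) :
    ∀ᶠ T : ℝ in atTop, ∀ s : ℂ, 1 / 2 ≤ s.re → s.re ≤ 1 → |s.im| ≤ T →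
      ∀ X : ℕ, T ^ (1 + η) ≤ X → ‖etaTail s X‖ ≤ ε := by
  obtain ⟨j, hj⟩ := exists_nat_gt (2 / η)
  rw [div_lt_iff₀ hη] at hj
  have hlim : Tendsto (fun T : ℝ => (j + 2) * T ^ (-(1 / 2) : ℝ) +
      2 * (4 * 2 ^ j * T ^ (-(j * η - 2)))) atTop (nhds 0) := by
    simpa using ((tendsto_rpow_neg_atTop (one_half_pos (α := ℝ))).const_mul (j + 2 : ℝ)).add
      (((tendsto_rpow_neg_atTop (sub_pos.mpr hj)).const_mul (4 * 2 ^ j)).const_mul 2)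
  filter_upwards [hlim.eventually_le_const hε, eventually_ge_atTop (j + 3 : ℝ),
    (tendsto_rpow_atTop hη).eventually_ge_atTop 2] with T hTε hTj hTη s hs hs1 him X hX
  have hT1 : 1 ≤ T := by linarith [j.cast_nonneg (α := ℝ)]
  have hT0 : 0 < T := by linarith
  rw [Real.rpow_add hT0, Real.rpow_one] at hX
  have hnorm : ‖s‖ + ((j + 1 : ℕ) + 1) ≤ 2 * T := by
    have hre : |s.re| ≤ 1 := abs_le.mpr ⟨by linarith, hs1⟩
    push_cast
    linarith [Complex.norm_le_abs_re_add_abs_im s]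
  have h2X : 2 * T ≤ X := (by nlinarith : 2 * T ≤ T * T ^ η).trans hX
  have hX0 : (0 : ℝ) < X := by linarith
  refine ((norm_etaTail_le (by linarith) j.succ_ne_zero (hnorm.trans h2X)).trans ?_).trans hTε
  have hpow : (X : ℝ) ^ (-s.re) ≤ T ^ (-(1 / 2) : ℝ) :=
    (Real.rpow_le_rpow_of_nonpos hT0 (by linarith) (by linarith)).trans
      (Real.rpow_le_rpow_of_exponent_le hT1 (by linarith))
  have hratio : 2 * T / X ≤ 2 * T ^ (-η) := by
    rw [div_le_iff₀ hX0]
    calc 2 * T = 2 * T ^ (-η) * (T * T ^ η) := by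
          rw [Real.rpow_neg hT0.le]
          field_simp
      _ ≤ 2 * T ^ (-η) * X := by gcongr
  have hrem : ((‖s‖ + ((j + 1 : ℕ) + 1)) / X) ^ (j + 1 + 1) * (X : ℝ) ^ 2 ≤
      4 * 2 ^ j * T ^ (-(j * η - 2)) := by
    calc _ ≤ (2 * T / X) ^ (j + 1 + 1) * (X : ℝ) ^ 2 := by gcongr
      _ = (2 * T / X * X) ^ 2 * (2 * T / X) ^ j := by ring
      _ = (2 * T) ^ 2 * (2 * T / X) ^ j := by rw [div_mul_cancel₀ _ hX0.ne']
      _ ≤ (2 * T) ^ 2 * (2 * T ^ (-η)) ^ j := by gcongr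
      _ = 4 * 2 ^ j * T ^ (-(j * η - 2)) := by
          rw [neg_sub, sub_eq_add_neg, Real.rpow_add hT0, Real.rpow_two, ← mul_neg, mul_comm _ (-η),
            Real.rpow_mul hT0.le, Real.rpow_natCast]
          ring
  rw [show (j + 2 : ℝ) = (j + 1 : ℕ) + 1 by push_cast; ring]
  exact add_le_add (mul_le_mul_of_nonneg_left hpow (by positivity))
    (mul_le_mul_of_nonneg_left hrem two_pos.le)

lemma eventually_sum_Ioc_rpow_neg_le {p : ℝ} (hp : 1 < p) {ρ : ℝ} (hρ : 0 < ρ) :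
    ∀ᶠ Y : ℕ in atTop, ∀ X : ℕ, ∑ n ∈ Finset.Ioc Y X, (n : ℝ) ^ (-p) ≤ ρ := by
  have hsummable : Summable fun n : ℕ => (n : ℝ) ^ (-p) :=
    Real.summable_nat_rpow.mpr (by linarith)
  obtain ⟨s, hs⟩ := summable_iff_vanishing_norm.mp hsummable ρ hρ
  filter_upwards [eventually_ge_atTop (s.sup id)] with Y hY X
  refine (le_abs_self _).trans (hs (Finset.Ioc Y X) ?_).le
  refine Finset.disjoint_left.mpr fun n hn hns => (Finset.mem_Ioc.mp hn).1.not_ge ?_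
  exact (Finset.le_sup (f := id) hns).trans hY

lemma isLittleO_natCeil_rpow {a p : ℝ} (ha : 0 < a) (hp : 0 ≤ p) (hap : a * p < 1) :
    (fun T : ℝ => (⌈T ^ a⌉₊ : ℝ) ^ p) =o[atTop] id := by
  have hceil : (fun T : ℝ => (⌈T ^ a⌉₊ : ℝ)) =O[atTop] fun T => T ^ a :=
    Asymptotics.isEquivalent_nat_ceil.isBigO.comp_tendsto (tendsto_rpow_atTop ha)
  refine (hceil.rpow hp ?_).trans_isLittleO ?_
  · filter_upwards [eventually_ge_atTop 0] with T hT
    exact Real.rpow_nonneg hT a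
  · refine (Asymptotics.isLittleO_iff_tendsto' ?_).mpr ?_
    · filter_upwards [eventually_ne_atTop 0] with T hT h
      exact absurd h hT
    · refine (tendsto_rpow_neg_atTop (sub_pos.mpr hap)).congr' ?_
      filter_upwards [eventually_gt_atTop 0] with T hT
      rw [← Real.rpow_mul hT.le, id, neg_sub, Real.rpow_sub hT, Real.rpow_one]

lemma norm_add_sq_le_two_mul {E : Type*} [SeminormedAddCommGroup E] (a b : E) :
    ‖a + b‖ ^ 2 ≤ 2 * ‖a‖ ^ 2 + 2 * ‖b‖ ^ 2 := by
  calc ‖a + b‖ ^ 2 ≤ (‖a‖ + ‖b‖) ^ 2 := by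
        gcongr
        exact norm_add_le a b
    _ ≤ 2 * (‖a‖ ^ 2 + ‖b‖ ^ 2) := add_sq_le
    _ = 2 * ‖a‖ ^ 2 + 2 * ‖b‖ ^ 2 := mul_add _ _ _

lemma norm_zetaTail_sq_le {s : ℂ} (hs : 0 < s.re) {σ₂ : ℝ} (hσ : s.re ≤ σ₂) (h2 : σ₂ < 1)
    {Y X : ℕ} (h : 2 * Y ≤ X) :
    ((2 : ℝ) ^ (1 - σ₂) - 1) ^ 2 * ‖zetaTail Y s‖ ^ 2 ≤
      2 * ‖∑ n ∈ Finset.Ioc Y X, etaCoeff Y n * (n : ℂ) ^ (-s)‖ ^ 2 +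
        2 * ‖etaTail s (X + 1)‖ ^ 2 := by
  have hnonneg : 0 ≤ (2 : ℝ) ^ (1 - σ₂) - 1 :=
    sub_nonneg.mpr (Real.one_le_rpow one_le_two (by linarith))
  have hfactor : (2 : ℝ) ^ (1 - σ₂) - 1 ≤ ‖(1 : ℂ) - 2 ^ (1 - s)‖ := by
    refine le_trans ?_ (two_rpow_sub_one_le_norm s)
    gcongr
    exact one_le_two
  rw [← mul_pow, ← norm_neg_one_pow_mul X (etaTail s (X + 1))]
  refine le_trans ?_ (norm_add_sq_le_two_mul _ _)
  rw [← one_sub_two_cpow_mul_zetaTail hs (hσ.trans_lt h2) h, norm_mul]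
  gcongr

lemma integral_norm_zetaTail_sq_le {σ σ₂ T κ : ℝ} (hσ : 0 < σ) (hσ2 : σ ≤ σ₂) (h2 : σ₂ < 1)
    (hT : 0 ≤ T) {Y X : ℕ} (h : 2 * Y ≤ X)
    (hκ : ∀ u ∈ Set.Icc (-T) T, ‖etaTail (σ + u * I) (X + 1)‖ ^ 2 ≤ κ) :
    ((2 : ℝ) ^ (1 - σ₂) - 1) ^ 2 * ∫ u in (-T)..T, ‖zetaTail Y (σ + u * I)‖ ^ 2 ≤
      2 * (∫ u in (-T)..T, ‖∑ n ∈ Finset.Ioc Y X,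
        etaCoeff Y n * (n : ℂ) ^ (-(σ + u * I))‖ ^ 2) + 4 * T * κ := by
  have hcont : Continuous fun u : ℝ => zetaTail Y (σ + u * I) := by
    simpa only [one_mul] using continuous_zetaTail_add_mul_I Y (s := σ)
      (by rw [ofReal_re]; linarith) 1
  have hzeta : Continuous fun u : ℝ => ‖zetaTail Y (σ + u * I)‖ ^ 2 := hcont.norm.pow 2
  have hpoly : Continuous fun u : ℝ =>
      ‖∑ n ∈ Finset.Ioc Y X, etaCoeff Y n * (n : ℂ) ^ (-(σ + u * I))‖ ^ 2 := by
    refine (continuous_finsetSum _ fun n hn => continuous_const.mul ?_).norm.pow 2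
    refine Continuous.const_cpow (by fun_prop) (Or.inl (Nat.cast_ne_zero.mpr ?_))
    have := (Finset.mem_Ioc.mp hn).1
    lia
  rw [← intervalIntegral.integral_const_mul]
  calc _ ≤ ∫ u in (-T)..T, (2 * ‖∑ n ∈ Finset.Ioc Y X,
        etaCoeff Y n * (n : ℂ) ^ (-(σ + u * I))‖ ^ 2 + 2 * κ) := by
        refine intervalIntegral.integral_mono_on (by linarith)
          ((hzeta.const_mul _).intervalIntegrable _ _)
          (((hpoly.const_mul 2).add_const (2 * κ)).intervalIntegrable _ _) fun u hu => ?_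
        refine (norm_zetaTail_sq_le (by simpa using hσ) (by simpa using hσ2) h2 h).trans ?_
        gcongr
        exact hκ u hu
    _ = _ := by
        rw [intervalIntegral.integral_add ((hpoly.const_mul 2).intervalIntegrable _ _)
          intervalIntegrable_const, intervalIntegral.integral_const_mul,
          intervalIntegral.integral_const, smul_eq_mul]
        ring

lemma exists_integral_norm_sum_etaCoeff_sq_le {σ₁ p : ℝ} (h1 : 0 < σ₁) (h1' : σ₁ ≤ 1)
    (hp : 2 - 2 * σ₁ < p) : ∃ C, ∀ ⦃σ⦄, σ₁ ≤ σ → ∀ Y X : ℕ, X ≠ 0 → ∀ T, 0 ≤ T →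
      ∫ u in (-T)..T, ‖∑ n ∈ Finset.Ioc Y X, etaCoeff Y n * (n : ℂ) ^ (-(σ + u * I))‖ ^ 2 ≤
        2 * T * ∑ n ∈ Finset.Ioc Y X, (n : ℝ) ^ (-(2 * σ₁)) + C * (X : ℝ) ^ p := by
  obtain ⟨C, -, hC⟩ := exists_integral_norm_sum_sq_le h1.le h1' hp
  refine ⟨C, fun σ hσ Y X hX T hT => ?_⟩
  have hsplit (u : ℝ) : ∑ n ∈ Finset.Ioc Y X, etaCoeff Y n * (n : ℂ) ^ (-(σ + u * I)) =
      ∑ n ∈ Finset.Ioc Y X, etaCoeff Y n * (n : ℂ) ^ (-(σ : ℂ)) * (n : ℂ) ^ (-(u * I)) :=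
    Finset.sum_congr rfl fun n hn => by
      have hn0 : (n : ℂ) ≠ 0 := Nat.cast_ne_zero.mpr (by have := (Finset.mem_Ioc.mp hn).1; lia)
      rw [neg_add, cpow_add _ _ hn0, mul_assoc]
  simp only [hsplit]
  refine hC _ (fun n => ?_) Y X hX T hT
  rw [norm_mul, norm_etaCoeff, one_mul]
  obtain rfl | hn := Nat.eq_zero_or_pos n
  · simp [(h1.trans_le hσ).ne', h1.ne']
  · rw [norm_natCast_cpow_of_pos hn, neg_re, ofReal_re]
    exact Real.rpow_le_rpow_of_exponent_le (by exact_mod_cast hn) (by linarith)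

theorem eventually_integral_norm_zetaTail_sq_le {σ₁ σ₂ : ℝ} (h1 : 1 / 2 < σ₁) (h12 : σ₁ ≤ σ₂)
    (h2 : σ₂ < 1) {ρ : ℝ} (hρ : 0 < ρ) :
    ∀ᶠ Y : ℕ in atTop, ∀ᶠ T : ℝ in atTop, ∀ σ ∈ Set.Icc σ₁ σ₂,
      ∫ u in (-T)..T, ‖zetaTail Y (σ + u * I)‖ ^ 2 ≤ ρ * T := by
  set c : ℝ := (2 : ℝ) ^ (1 - σ₂) - 1
  have hc : 0 < c := sub_pos.mpr (Real.one_lt_rpow one_lt_two (by linarith))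
  obtain ⟨κ, hκ0, hκ⟩ : ∃ κ > 0, 10 * κ = ρ * c ^ 2 := ⟨ρ * c ^ 2 / 10, by positivity, by ring⟩
  -- These exponents satisfy `2 - 2 * σ₁ < p` and `(1 + η) * p < 1`.
  obtain ⟨η, hη0, p, hp0, hp, hηp⟩ : ∃ η > 0, ∃ p ≥ 0, 2 - 2 * σ₁ < p ∧ (1 + η) * p < 1 :=
    ⟨σ₁ - 1 / 2, by linarith, 1 - (σ₁ - 1 / 2), by linarith, by linarith, by nlinarith⟩
  obtain ⟨C, hC⟩ := exists_integral_norm_sum_etaCoeff_sq_le (by linarith) (by linarith) hp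
  have hlittle := ((isLittleO_natCeil_rpow (by linarith) hp0 hηp).const_mul_left C).bound hκ0
  filter_upwards [eventually_sum_Ioc_rpow_neg_le (p := 2 * σ₁) (by linarith) hκ0] with Y hY
  filter_upwards [hlittle, eventually_norm_etaTail_le hη0 (Real.sqrt_pos.mpr hκ0),
    eventually_ge_atTop (2 * Y + 1 : ℝ)] with T hTX hTtail hTY σ ⟨hσ1, hσ2⟩
  have hT1 : 1 ≤ T := by linarith [Y.cast_nonneg (α := ℝ)]
  set X : ℕ := ⌈T ^ (1 + η)⌉₊
  have hWX : T ^ (1 + η) ≤ X := Nat.le_ceil _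
  have hTX' : T ≤ X := (Real.self_le_rpow_of_one_le hT1 (by linarith)).trans hWX
  have hYX : 2 * Y + 1 ≤ X := by exact_mod_cast hTY.trans hTX'
  rw [id, Real.norm_of_nonneg (by linarith : 0 ≤ T)] at hTX
  have htail : ∀ u ∈ Set.Icc (-T) T, ‖etaTail (σ + u * I) (X + 1)‖ ^ 2 ≤ κ := fun u hu => by
    refine (Real.le_sqrt (norm_nonneg _) hκ0.le).mp (hTtail _ ?_ ?_ ?_ _ ?_)
    · simp; linarith
    · simp; linarith
    · simpa [abs_le] using hu
    · push_cast
      linarith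
  have hpoly : ∫ u in (-T)..T, ‖∑ n ∈ Finset.Ioc Y X,
      etaCoeff Y n * (n : ℂ) ^ (-(σ + u * I))‖ ^ 2 ≤ 2 * T * κ + κ * T := by
    refine (hC hσ1 Y X (by lia) T (by linarith)).trans
      (add_le_add ?_ ((Real.le_norm_self _).trans hTX))
    gcongr
    exact hY X
  refine le_of_mul_le_mul_left ?_ (pow_pos hc 2)
  refine (integral_norm_zetaTail_sq_le (by linarith) hσ2 h2 (by linarith) (by lia) htail).trans ?_
  linear_combination 2 * hpoly + T * hκ

/-! ### Trigonometric polynomials with nonnegative coefficients -/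

/-- `F` is a trigonometric polynomial with nonnegative coefficients and frequencies `α * log a`,
`a` a positive rational, and its constant term is at least `κ`. The index type allows repeated
frequencies; `i₀` singles out a constant summand that alone has coefficient at least `κ`. -/
def IsPosLogPoly (α κ : ℝ) (F : ℝ → ℝ) : Prop :=
  ∃ (ι : Type) (S : Finset ι) (c : ι → ℝ) (a : ι → ℚ), (∀ i, 0 ≤ c i) ∧ (∀ i, 0 < a i) ∧
    (∃ i₀ ∈ S, a i₀ = 1 ∧ κ ≤ c i₀) ∧
    ∀ τ : ℝ, (F τ : ℂ) = ∑ i ∈ S, (c i : ℂ) * cexp (I * (α * Real.log (a i) : ℝ) * τ)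

lemma isPosLogPoly_one (α : ℝ) : IsPosLogPoly α 1 1 :=
  ⟨Unit, {()}, 1, 1, by simp, by simp, by simp, by simp⟩

lemma IsPosLogPoly.mul {α κ κ' : ℝ} {F G : ℝ → ℝ} (hF : IsPosLogPoly α κ F)
    (hG : IsPosLogPoly α κ' G) (hκ' : 0 ≤ κ') : IsPosLogPoly α (κ * κ') (F * G) := by
  obtain ⟨ι, S, c, a, hc, ha, ⟨i₀, hi₀, ha₀, hκ⟩, hF⟩ := hF
  obtain ⟨ι', S', c', a', hc', ha', ⟨i₀', hi₀', ha₀', hκ''⟩, hG⟩ := hG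
  refine ⟨ι × ι', S ×ˢ S', fun i => c i.1 * c' i.2, fun i => a i.1 * a' i.2,
    fun i => mul_nonneg (hc _) (hc' _), fun i => mul_pos (ha _) (ha' _),
    ⟨(i₀, i₀'), Finset.mk_mem_product hi₀ hi₀', by simp [ha₀, ha₀'],
      mul_le_mul hκ hκ'' hκ' (hc _)⟩, fun τ => ?_⟩
  rw [Pi.mul_apply, ofReal_mul, hF, hG, Finset.sum_mul_sum, Finset.sum_product]
  refine Finset.sum_congr rfl fun i _ => Finset.sum_congr rfl fun j _ => ?_
  rw [mul_mul_mul_comm, ← exp_add, Rat.cast_mul, Real.log_mul (by exact_mod_cast (ha i).ne')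
    (by exact_mod_cast (ha' j).ne')]
  push_cast
  ring_nf

lemma cos_half_pow_eq_sum (x : ℝ) (M : ℕ) : ((Real.cos (x / 2) ^ (2 * M) : ℝ) : ℂ) =
    ∑ j ∈ Finset.range (2 * M + 1),
      (((2 * M).choose j / 4 ^ M : ℝ) : ℂ) * cexp (I * (((j : ℤ) - M : ℤ) * x : ℝ)) := by
  rw [ofReal_pow, ofReal_cos, Complex.cos, div_pow, add_pow, Finset.sum_div]
  refine Finset.sum_congr rfl fun j hj => ?_
  have hj : j ≤ 2 * M := by simpa [Nat.lt_succ_iff] using hj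
  have hexp : cexp (I * (((j : ℤ) - M : ℤ) * x : ℝ)) =
      cexp ((x / 2 : ℝ) * I) ^ j * cexp (-(x / 2 : ℝ) * I) ^ (2 * M - j) := by
    rw [← exp_nat_mul, ← exp_nat_mul, ← exp_add]
    push_cast [hj]
    ring_nf
  rw [hexp, pow_mul (2 : ℂ)]
  push_cast
  ring

lemma isPosLogPoly_cos_half_pow (α : ℝ) {M n : ℕ} (hM : M ≠ 0) (hn : n ≠ 0) :
    IsPosLogPoly α (1 / (2 * M)) fun τ => Real.cos (α * Real.log n * τ / 2) ^ (2 * M) := by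
  refine ⟨ℕ, Finset.range (2 * M + 1), fun j => (2 * M).choose j / 4 ^ M,
    fun j => (n : ℚ) ^ ((j : ℤ) - M), fun j => by positivity, fun j => by positivity,
    ⟨M, by simp; lia, by simp, ?_⟩, fun τ => ?_⟩
  · have h := Nat.four_pow_le_two_mul_self_mul_centralBinom M (Nat.pos_of_ne_zero hM)
    rw [Nat.centralBinom_eq_two_mul_choose] at h
    rw [div_le_div_iff₀ (by positivity) (by positivity)]
    exact_mod_cast (one_mul _).trans_le (h.trans_eq (mul_comm _ _))
  · rw [cos_half_pow_eq_sum]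
    refine Finset.sum_congr rfl fun j _ => ?_
    rw [Rat.cast_zpow, Rat.cast_natCast, Real.log_zpow]
    push_cast
    ring_nf

/-- A weight that favours those `τ` for which `n ^ (α * τ * I)` is near `1` for all `n ≤ N`. -/
noncomputable def logWeight (α : ℝ) (M N : ℕ) (τ : ℝ) : ℝ :=
  ∏ n ∈ Finset.Icc 1 N, Real.cos (α * Real.log n * τ / 2) ^ (2 * M)

lemma isPosLogPoly_logWeight (α : ℝ) {M : ℕ} (hM : M ≠ 0) (N : ℕ) :
    IsPosLogPoly α ((1 / (2 * M)) ^ N) (logWeight α M N) := by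
  induction N with
  | zero =>
    have hzero : logWeight α M 0 = 1 := by
      funext τ
      simp [logWeight]
    rw [hzero, pow_zero]
    exact isPosLogPoly_one α
  | succ N ih =>
    have hsucc : logWeight α M (N + 1) = logWeight α M N *
        fun τ => Real.cos (α * Real.log (N + 1 : ℕ) * τ / 2) ^ (2 * M) := by
      funext τ
      simp only [logWeight, Pi.mul_apply, Finset.prod_Icc_succ_top (Nat.le_add_left 1 N)]
    rw [hsucc, pow_succ]
    exact ih.mul (isPosLogPoly_cos_half_pow α hM N.succ_ne_zero) (by positivity)

lemma continuous_logWeight (α : ℝ) (M N : ℕ) : Continuous (logWeight α M N) := by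
  unfold logWeight
  fun_prop

lemma logWeight_nonneg (α : ℝ) (M N : ℕ) (τ : ℝ) : 0 ≤ logWeight α M N τ :=
  Finset.prod_nonneg fun _ _ => (even_two_mul M).pow_nonneg _

lemma cos_pow_two_mul_le_one (x : ℝ) (M : ℕ) : Real.cos x ^ (2 * M) ≤ 1 := by
  rw [pow_mul]
  exact pow_le_one₀ (sq_nonneg _) (Real.cos_sq_le_one x)

lemma logWeight_le_one (α : ℝ) (M N : ℕ) (τ : ℝ) : logWeight α M N τ ≤ 1 :=
  Finset.prod_le_one (fun _ _ => (even_two_mul M).pow_nonneg _) fun _ _ =>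
    cos_pow_two_mul_le_one _ M

lemma logWeight_le_of_le_norm {α τ δ : ℝ} {N n : ℕ} (hn : n ∈ Finset.Icc 1 N) (hδ : 0 ≤ δ)
    (h : δ ≤ ‖cexp (I * (α * Real.log n * τ : ℝ)) - 1‖) (M : ℕ) :
    logWeight α M N τ ≤ (1 - δ ^ 2 / 4) ^ M := by
  have hfactor : logWeight α M N τ ≤ Real.cos (α * Real.log n * τ / 2) ^ (2 * M) := by
    rw [logWeight, ← Finset.mul_prod_erase _ _ hn]
    exact mul_le_of_le_one_right ((even_two_mul M).pow_nonneg _) <| Finset.prod_le_one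
      (fun _ _ => (even_two_mul M).pow_nonneg _) fun _ _ => cos_pow_two_mul_le_one _ M
  refine hfactor.trans ?_
  rw [pow_mul]
  refine pow_le_pow_left₀ (sq_nonneg _) ?_ M
  rw [norm_exp_I_mul_ofReal_sub_one] at h
  have hsq := pow_le_pow_left₀ hδ h 2
  rw [Real.norm_eq_abs, sq_abs] at hsq
  rw [Real.cos_sq']
  linarith

lemma isLittleO_integral_exp {l : ℝ} (hl : l ≠ 0) :
    (fun T : ℝ => ∫ u in (0 : ℝ)..T, cexp (I * l * u)) =o[atTop] (id : ℝ → ℝ) :=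
  (Asymptotics.IsBigO.of_bound (2 * |l|⁻¹) <| .of_forall fun T => by
    simpa using norm_integral_exp_le hl 0 T).trans_isLittleO
    (Asymptotics.isLittleO_const_id_atTop (1 : ℝ))

lemma integral_sum_exp_mul_exp {ι : Type*} (S : Finset ι) (c ω : ι → ℝ) (l A B : ℝ) :
    ∫ u in A..B, (∑ i ∈ S, (c i : ℂ) * cexp (I * ω i * u)) * cexp (I * l * u) =
      ∑ i ∈ S, (c i : ℂ) * ∫ u in A..B, cexp (I * (ω i + l : ℝ) * u) := by
  simp only [Finset.sum_mul, ← intervalIntegral.integral_const_mul]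
  rw [intervalIntegral.integral_finsetSum fun i _ => by
    apply Continuous.intervalIntegrable
    fun_prop]
  refine Finset.sum_congr rfl fun i _ => intervalIntegral.integral_congr fun u _ => ?_
  rw [mul_assoc, ← exp_add]
  push_cast
  ring_nf

lemma IsPosLogPoly.isLittleO_integral_mul_exp {α κ l : ℝ} {F : ℝ → ℝ} (hF : IsPosLogPoly α κ F)
    (hl : ∀ a : ℚ, 0 < a → α * Real.log a + l ≠ 0) :
    (fun T : ℝ => ∫ u in (0 : ℝ)..T, (F u : ℂ) * cexp (I * l * u)) =o[atTop] (id : ℝ → ℝ) := by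
  obtain ⟨ι, S, c, a, -, ha, -, hF⟩ := hF
  simp only [hF, integral_sum_exp_mul_exp]
  exact Asymptotics.IsLittleO.fun_sum fun i _ =>
    (isLittleO_integral_exp (hl (a i) (ha i))).const_mul_left _

lemma IsPosLogPoly.eventually_mul_le_integral {α κ κ' : ℝ} {F : ℝ → ℝ} (hF : IsPosLogPoly α κ F)
    (hα : α ≠ 0) (hκ' : κ' < κ) : ∀ᶠ T : ℝ in atTop, κ' * T ≤ ∫ u in (0 : ℝ)..T, F u := by
  obtain ⟨ι, S, c, a, hc, ha, ⟨i₀, hi₀, ha₀, hκ⟩, hF⟩ := hF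
  have hint (T : ℝ) : ((∫ u in (0 : ℝ)..T, F u : ℝ) : ℂ) =
      (∑ i ∈ S with a i = 1, c i : ℝ) * T + ∑ i ∈ S with ¬ a i = 1,
        (c i : ℂ) * ∫ u in (0 : ℝ)..T, cexp (I * (α * Real.log (a i) : ℝ) * u) := by
    have h := integral_sum_exp_mul_exp S c (fun i => α * Real.log (a i)) 0 0 T
    simp only [ofReal_zero, mul_zero, zero_mul, exp_zero, mul_one, add_zero, ← hF,
      intervalIntegral.integral_ofReal] at h
    rw [h, ← Finset.sum_filter_add_sum_filter_not S (a · = 1), ofReal_sum, Finset.sum_mul]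
    congr 1
    refine Finset.sum_congr rfl fun i hi => ?_
    simp [(Finset.mem_filter.mp hi).2]
  have hrest : (fun T : ℝ => ∑ i ∈ S with ¬ a i = 1, (c i : ℂ) *
      ∫ u in (0 : ℝ)..T, cexp (I * (α * Real.log (a i) : ℝ) * u)) =o[atTop] (id : ℝ → ℝ) :=
    Asymptotics.IsLittleO.fun_sum fun i hi => by
      refine (isLittleO_integral_exp (mul_ne_zero hα ?_)).const_mul_left _
      exact Real.log_ne_zero_of_pos_of_ne_one (by exact_mod_cast ha i)
        (by exact_mod_cast (Finset.mem_filter.mp hi).2)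
  have hconst : κ ≤ ∑ i ∈ S with a i = 1, c i := hκ.trans <|
    Finset.single_le_sum (fun i _ => hc i) (Finset.mem_filter.mpr ⟨hi₀, ha₀⟩)
  filter_upwards [hrest.bound (sub_pos.mpr hκ'), eventually_ge_atTop 0] with T hT hT0
  rw [eq_sub_iff_add_eq'.mpr (hint T).symm, ← ofReal_mul, ← ofReal_sub, norm_real, id,
    Real.norm_of_nonneg hT0] at hT
  linear_combination (neg_le_of_abs_le hT) + mul_le_mul_of_nonneg_right hconst hT0

/-! ### Weighted mean squares -/

lemma natCast_cpow_neg_add_mul_I {n : ℕ} (hn : n ≠ 0) (z : ℂ) (β t : ℝ) :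
    (n : ℂ) ^ (-(z + (β * t : ℝ) * I)) =
      (n : ℂ) ^ (-z) * cexp (I * (-(β * Real.log n) : ℝ) * t) := by
  rw [neg_add, cpow_add _ _ (Nat.cast_ne_zero.mpr hn), natCast_cpow_neg_mul_I hn]
  push_cast
  ring_nf

lemma norm_integral_mul_exp_le {F : ℝ → ℝ} (hF0 : ∀ t, 0 ≤ F t) (l : ℝ) {T : ℝ} (hT : 0 ≤ T) :
    ‖∫ u in (0 : ℝ)..T, (F u : ℂ) * cexp (I * l * u)‖ ≤ ∫ u in (0 : ℝ)..T, F u := by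
  refine (intervalIntegral.norm_integral_le_integral_norm hT).trans_eq ?_
  refine intervalIntegral.integral_congr fun u _ => ?_
  simp only [norm_mul, norm_real, Real.norm_of_nonneg (hF0 u)]
  rw [mul_assoc, ← ofReal_mul, norm_exp_I_mul_ofReal, mul_one]

lemma isRatPow_of_mul_log_eq {α β : ℝ} (hα : α ≠ 0) {a : ℚ} (ha : 0 < a) {m n : ℕ} (hm : m ≠ 0)
    (hn : n ≠ 0) (h : α * Real.log a = β * Real.log m - β * Real.log n) :
    IsRatPow (β / α) ((m : ℚ) / n) := by
  refine ⟨by positivity, a, ?_⟩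
  rw [Rat.cast_div, Rat.cast_natCast, Rat.cast_natCast, Real.rpow_def_of_pos (by positivity),
    ← Real.exp_log (show (0 : ℝ) < a by exact_mod_cast ha),
    Real.log_div (by positivity) (by positivity)]
  congr 1
  field_simp
  linarith

lemma IsPosLogPoly.eventually_norm_integral_le {α κ : ℝ} {F : ℝ → ℝ} (hF : IsPosLogPoly α κ F)
    (hα : α ≠ 0) (β : ℝ) (N Y : ℕ) {ρ : ℝ} (hρ : 0 < ρ) : ∀ᶠ T : ℝ in atTop,
      ∀ m ∈ Finset.Ioc N Y, ∀ n ∈ Finset.Ioc N Y, ¬ IsRatPow (β / α) ((m : ℚ) / n) →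
        ‖∫ u in (0 : ℝ)..T, (F u : ℂ) *
          cexp (I * (-(β * Real.log m) - -(β * Real.log n) : ℝ) * u)‖ ≤ ρ * T := by
  refine (eventually_all_finset _).mpr fun m hm => (eventually_all_finset _).mpr fun n hn => ?_
  by_cases hmn : IsRatPow (β / α) ((m : ℚ) / n)
  · exact .of_forall fun T h => absurd hmn h
  have hm0 := (Finset.mem_Ioc.mp hm).1
  have hn0 := (Finset.mem_Ioc.mp hn).1
  have hsmall := hF.isLittleO_integral_mul_exp (l := -(β * Real.log m) - -(β * Real.log n))
    fun a ha h => hmn (isRatPow_of_mul_log_eq hα ha (by lia) (by lia) (by linarith))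
  filter_upwards [hsmall.bound hρ, eventually_ge_atTop 0] with T hT hT0 _
  rwa [id, Real.norm_of_nonneg hT0] at hT

open Classical in
lemma norm_cpow_mul_norm_integral_le {c σ κ T : ℝ} (hσ : 0 ≤ σ) (hκ : 0 ≤ κ) {F : ℝ → ℝ}
    (hF0 : ∀ t, 0 ≤ F t) (hT : 0 ≤ T) {m n : ℕ} (hm : m ≠ 0) (hn : n ≠ 0) {l : ℝ}
    (hl : ¬ IsRatPow c ((m : ℚ) / n) → ‖∫ u in (0 : ℝ)..T, (F u : ℂ) * cexp (I * l * u)‖ ≤ κ)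
    {z : ℂ} (hz : σ ≤ z.re) :
    ‖(m : ℂ) ^ (-z)‖ * ‖(n : ℂ) ^ (-z)‖ * ‖∫ u in (0 : ℝ)..T, (F u : ℂ) * cexp (I * l * u)‖ ≤
      (if IsRatPow c ((m : ℚ) / n) then ((m : ℝ) * n) ^ (-σ) else 0) *
        (∫ t in (0 : ℝ)..T, F t) + κ := by
  have hmn : (1 : ℝ) ≤ m * n := by exact_mod_cast Nat.one_le_iff_ne_zero.mpr (mul_ne_zero hm hn)
  have hpow : ‖(m : ℂ) ^ (-z)‖ * ‖(n : ℂ) ^ (-z)‖ ≤ ((m : ℝ) * n) ^ (-σ) := by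
    rw [norm_natCast_cpow_of_pos (Nat.pos_of_ne_zero hm),
      norm_natCast_cpow_of_pos (Nat.pos_of_ne_zero hn), ← Real.mul_rpow (by simp) (by simp), neg_re]
    exact Real.rpow_le_rpow_of_exponent_le hmn (by linarith)
  split_ifs with h
  · refine le_add_of_le_of_nonneg ?_ hκ
    gcongr
    exact norm_integral_mul_exp_le hF0 l hT
  · rw [zero_mul, zero_add]
    refine (mul_le_of_le_one_left (norm_nonneg _) (hpow.trans ?_)).trans (hl h)
    exact Real.rpow_le_one_of_one_le_of_nonpos hmn (by linarith)

lemma integral_mul_norm_sum_cpow_sq_le {β : ℝ} {F : ℝ → ℝ} (hFc : Continuous F) (N Y : ℕ) (z : ℂ)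
    (A B : ℝ) :
    ∫ t in A..B, F t * ‖∑ n ∈ Finset.Ioc N Y, (n : ℂ) ^ (-(z + (β * t : ℝ) * I))‖ ^ 2 ≤
      ∑ m ∈ Finset.Ioc N Y, ∑ n ∈ Finset.Ioc N Y, ‖(m : ℂ) ^ (-z)‖ * ‖(n : ℂ) ^ (-z)‖ *
        ‖∫ u in A..B, (F u : ℂ) *
          cexp (I * (-(β * Real.log m) - -(β * Real.log n) : ℝ) * u)‖ := by
  refine le_of_eq_of_le (intervalIntegral.integral_congr fun t _ => ?_)
    (integral_mul_norm_sum_exp_sq_le _ (fun n : ℕ => (n : ℂ) ^ (-z))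
      (fun n => -(β * Real.log n)) hFc A B)
  congr 3
  refine Finset.sum_congr rfl fun n hn => natCast_cpow_neg_add_mul_I ?_ z β t
  have := (Finset.mem_Ioc.mp hn).1
  lia

lemma eventually_integral_mul_norm_sum_cpow_sq_le {α β : ℝ} (hα : α ≠ 0)
    (hirr : Irrational (β / α)) {σ : ℝ} (hσ : 1 / 2 < σ) {ρ : ℝ} (hρ : 0 < ρ) :
    ∀ᶠ N : ℕ in atTop, ∀ (κ : ℝ) (F : ℝ → ℝ), IsPosLogPoly α κ F → (∀ t, 0 ≤ F t) →
      Continuous F → ∀ (Y : ℕ) (ρ' : ℝ), 0 < ρ' → ∀ᶠ T : ℝ in atTop, ∀ z : ℂ, σ ≤ z.re →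
        ∫ t in (0 : ℝ)..T, F t *
            ‖∑ n ∈ Finset.Ioc N Y, (n : ℂ) ^ (-(z + (β * t : ℝ) * I))‖ ^ 2 ≤
          ρ * (∫ t in (0 : ℝ)..T, F t) + ρ' * T := by
  classical
  filter_upwards [eventually_sum_isRatPow_le hirr hσ hρ] with N hN κ F hF hF0 hFc Y ρ' hρ'
  set S := Finset.Ioc N Y
  have hκ : 0 < ρ' / (S.card + 1) ^ 2 := by positivity
  filter_upwards [hF.eventually_norm_integral_le hα β N Y hκ, eventually_ge_atTop 0]
    with T hT hT0 z hz
  refine (integral_mul_norm_sum_cpow_sq_le hFc N Y z 0 T).trans ?_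
  calc _ ≤ ∑ m ∈ S, ∑ n ∈ S,
        ((if IsRatPow (β / α) ((m : ℚ) / n) then ((m : ℝ) * n) ^ (-σ) else 0) *
          (∫ t in (0 : ℝ)..T, F t) + ρ' / (S.card + 1) ^ 2 * T) := by
        gcongr with m hm n hn
        have hm0 := (Finset.mem_Ioc.mp hm).1
        have hn0 := (Finset.mem_Ioc.mp hn).1
        exact norm_cpow_mul_norm_integral_le (by linarith) (by positivity) hF0 hT0 (by lia)
          (by lia) (hT m hm n hn) hz
    _ = (∑ m ∈ S, ∑ n ∈ S,
          if IsRatPow (β / α) ((m : ℚ) / n) then ((m : ℝ) * n) ^ (-σ) else 0) *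
          (∫ t in (0 : ℝ)..T, F t) + S.card ^ 2 * (ρ' / (S.card + 1) ^ 2) * T := by
        simp only [Finset.sum_add_distrib, ← Finset.sum_mul, Finset.sum_const, nsmul_eq_mul]
        ring
    _ ≤ _ := by
        have hcard : (S.card : ℝ) ^ 2 * (ρ' / (S.card + 1) ^ 2) ≤ ρ' := by
          rw [mul_div_left_comm]
          exact mul_le_of_le_one_right hρ'.le
            (div_le_one_of_le₀ (by gcongr; linarith) (by positivity))
        have hint : 0 ≤ ∫ t in (0 : ℝ)..T, F t :=
          intervalIntegral.integral_nonneg hT0 fun t _ => hF0 t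
        gcongr
        exact hN Y

lemma abs_integral_le_integral_neg_self {g : ℝ → ℝ} (hg : Continuous g) (hg0 : ∀ u, 0 ≤ g u)
    {a b R : ℝ} (ha : |a| ≤ R) (hb : |b| ≤ R) :
    |∫ u in a..b, g u| ≤ ∫ u in (-R)..R, g u := by
  rw [abs_le] at ha hb
  have hR : -R ≤ R := ha.1.trans ha.2
  refine (intervalIntegral.abs_integral_mono_interval ?_ (.of_forall hg0)
    (hg.intervalIntegrable _ _)).trans_eq (abs_of_nonneg ?_)
  · rw [Set.uIoc_of_le hR]
    exact Set.Ioc_subset_Ioc (le_min ha.1 hb.1) (max_le ha.2 hb.2)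
  · exact intervalIntegral.integral_nonneg hR fun u _ => hg0 u

lemma integral_norm_zetaTail_shift_sq {β : ℝ} (hβ : β ≠ 0) (Y : ℕ) (z : ℂ) (T : ℝ) :
    ∫ t in (0 : ℝ)..T, ‖zetaTail Y (z + (β * t : ℝ) * I)‖ ^ 2 =
      β⁻¹ * ∫ u in (β * 0 + z.im)..(β * T + z.im), ‖zetaTail Y (z.re + u * I)‖ ^ 2 := by
  rw [← smul_eq_mul,
    ← intervalIntegral.integral_comp_mul_add (fun u : ℝ => ‖zetaTail Y (z.re + u * I)‖ ^ 2) hβ]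
  refine intervalIntegral.integral_congr fun t _ => ?_
  have hz : z + (β * t : ℝ) * I = z.re + (β * t + z.im : ℝ) * I := by
    conv_lhs => rw [← re_add_im z]
    push_cast
    ring
  simp only [hz]

lemma eventually_integral_norm_zetaTail_shift_sq_le {β σ₁ σ₂ : ℝ} (hβ : β ≠ 0) (h1 : 1 / 2 < σ₁)
    (h12 : σ₁ ≤ σ₂) (h2 : σ₂ < 1) (B : ℝ) {ρ : ℝ} (hρ : 0 < ρ) :
    ∀ᶠ Y : ℕ in atTop, ∀ᶠ T : ℝ in atTop, ∀ z : ℂ, z.re ∈ Set.Icc σ₁ σ₂ → |z.im| ≤ B →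
      ∫ t in (0 : ℝ)..T, ‖zetaTail Y (z + (β * t : ℝ) * I)‖ ^ 2 ≤ ρ * T := by
  have hβ0 : 0 < |β| := abs_pos.mpr hβ
  filter_upwards [eventually_integral_norm_zetaTail_sq_le h1 h12 h2 (half_pos hρ)] with Y hY
  have hR : Tendsto (fun T : ℝ => |β| * T + B) atTop atTop :=
    tendsto_atTop_add_const_right _ _ (tendsto_id.const_mul_atTop hβ0)
  filter_upwards [hR.eventually hY, eventually_ge_atTop 0, eventually_ge_atTop (B / |β|)]
    with T hT hT0 hTB z hz hzB
  set R := |β| * T + B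
  set g : ℝ → ℝ := fun u => ‖zetaTail Y (z.re + u * I)‖ ^ 2
  have hg : Continuous g := by
    have hre : (z.re : ℂ).re ≠ 1 := by simpa using (hz.2.trans_lt h2).ne
    have hcont := continuous_zetaTail_add_mul_I Y hre 1
    simp only [one_mul] at hcont
    exact hcont.norm.pow 2
  have hlo : |β * 0 + z.im| ≤ R := by
    rw [mul_zero, zero_add]
    exact hzB.trans (le_add_of_nonneg_left (by positivity))
  have hhi : |β * T + z.im| ≤ R := by
    refine (abs_add_le _ _).trans ?_
    rw [abs_mul, abs_of_nonneg hT0]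
    exact add_le_add le_rfl hzB
  calc _ ≤ |β|⁻¹ * |∫ u in (β * 0 + z.im)..(β * T + z.im), g u| := by
        rw [integral_norm_zetaTail_shift_sq hβ, ← abs_inv, ← abs_mul]
        exact le_abs_self _
    _ ≤ |β|⁻¹ * (ρ / 2 * R) := by
        gcongr
        exact (abs_integral_le_integral_neg_self hg (fun u => sq_nonneg _) hlo hhi).trans
          (hT z.re hz)
    _ ≤ |β|⁻¹ * (ρ / 2 * (|β| * T + |β| * T)) := by
        rw [div_le_iff₀' hβ0] at hTB
        gcongr
        exact add_le_add le_rfl hTB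
    _ = ρ * T := by
        field_simp
        ring

lemma zetaTail_eq_sum_add {N Y : ℕ} (h : N ≤ Y) (s : ℂ) :
    zetaTail N s = ∑ n ∈ Finset.Ioc N Y, (n : ℂ) ^ (-s) + zetaTail Y s := by
  have hIcc (a : ℕ) : Finset.Icc 1 a = Finset.Ioc 0 a := rfl
  unfold zetaTail
  rw [hIcc, hIcc, ← Finset.sum_Ioc_consecutive _ N.zero_le h]
  ring

lemma integral_mul_norm_zetaTail_sq_le {F : ℝ → ℝ} (hFc : Continuous F) (hF0 : ∀ t, 0 ≤ F t)
    (hF1 : ∀ t, F t ≤ 1) {N Y : ℕ} (h : N ≤ Y) {z : ℂ} (hz : z.re ≠ 1) (β : ℝ) {T : ℝ}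
    (hT : 0 ≤ T) :
    ∫ t in (0 : ℝ)..T, F t * ‖zetaTail N (z + (β * t : ℝ) * I)‖ ^ 2 ≤
      2 * (∫ t in (0 : ℝ)..T, F t *
        ‖∑ n ∈ Finset.Ioc N Y, (n : ℂ) ^ (-(z + (β * t : ℝ) * I))‖ ^ 2) +
      2 * ∫ t in (0 : ℝ)..T, ‖zetaTail Y (z + (β * t : ℝ) * I)‖ ^ 2 := by
  have hN : Continuous fun t : ℝ => F t * ‖zetaTail N (z + (β * t : ℝ) * I)‖ ^ 2 :=
    hFc.mul ((continuous_zetaTail_add_mul_I N hz β).norm.pow 2)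
  have hY : Continuous fun t : ℝ => 2 * ‖zetaTail Y (z + (β * t : ℝ) * I)‖ ^ 2 :=
    ((continuous_zetaTail_add_mul_I Y hz β).norm.pow 2).const_mul 2
  have hP : Continuous fun t : ℝ => 2 * (F t *
      ‖∑ n ∈ Finset.Ioc N Y, (n : ℂ) ^ (-(z + (β * t : ℝ) * I))‖ ^ 2) := by
    refine (hFc.mul ((continuous_finsetSum _ fun n hn => Continuous.const_cpow (by fun_prop)
      (Or.inl (Nat.cast_ne_zero.mpr ?_))).norm.pow 2)).const_mul 2
    have := (Finset.mem_Ioc.mp hn).1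
    lia
  rw [← intervalIntegral.integral_const_mul, ← intervalIntegral.integral_const_mul,
    ← intervalIntegral.integral_add (hP.intervalIntegrable _ _) (hY.intervalIntegrable _ _)]
  refine intervalIntegral.integral_mono_on hT (hN.intervalIntegrable _ _)
    ((hP.add hY).intervalIntegrable _ _) fun t _ => ?_
  rw [zetaTail_eq_sum_add h]
  calc _ ≤ F t * (2 * _ + 2 * _) :=
        mul_le_mul_of_nonneg_left (norm_add_sq_le_two_mul _ _) (hF0 t)
    _ ≤ _ := by
        rw [mul_add, mul_left_comm]
        exact add_le_add_right (mul_le_of_le_one_left (by positivity) (hF1 t)) _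

theorem eventually_integral_mul_norm_zetaTail_sq_le {α β : ℝ} (hα : α ≠ 0)
    (hirr : Irrational (β / α)) {σ₁ σ₂ : ℝ} (h1 : 1 / 2 < σ₁) (h12 : σ₁ ≤ σ₂) (h2 : σ₂ < 1)
    (B : ℝ) {ρ : ℝ} (hρ : 0 < ρ) :
    ∀ᶠ N : ℕ in atTop, ∀ (κ : ℝ) (F : ℝ → ℝ), IsPosLogPoly α κ F → (∀ t, 0 ≤ F t) →
      (∀ t, F t ≤ 1) → Continuous F → ∀ ρ' > 0, ∀ᶠ T : ℝ in atTop, ∀ z : ℂ,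
        z.re ∈ Set.Icc σ₁ σ₂ → |z.im| ≤ B →
          ∫ t in (0 : ℝ)..T, F t * ‖zetaTail N (z + (β * t : ℝ) * I)‖ ^ 2 ≤
            ρ * (∫ t in (0 : ℝ)..T, F t) + ρ' * T := by
  have hβ : β ≠ 0 := fun h => hirr.ne_zero (by simp [h])
  filter_upwards [eventually_integral_mul_norm_sum_cpow_sq_le hα hirr h1 (half_pos hρ)]
    with N hN κ F hF hF0 hF1 hFc ρ' hρ'
  obtain ⟨Y, hY, hNY⟩ := ((eventually_integral_norm_zetaTail_shift_sq_le hβ h1 h12 h2 B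
    (show 0 < ρ' / 4 by positivity)).and (eventually_ge_atTop N)).exists
  filter_upwards [hY, hN κ F hF hF0 hFc Y (ρ' / 4) (by positivity), eventually_ge_atTop 0]
    with T htail hpoly hT z hz hzB
  have hz1 : z.re ≠ 1 := (hz.2.trans_lt h2).ne
  linear_combination integral_mul_norm_zetaTail_sq_le hFc hF0 hF1 hNY hz1 β hT +
    2 * hpoly z hz.1 + 2 * htail z hz hzB

/-! ### From mean squares to pointwise bounds -/

theorem norm_le_integral_norm_circleMap {E : Type*} [NormedAddCommGroup E] [NormedSpace ℂ E]
    [CompleteSpace E] {f : ℂ → E} {c w : ℂ} {r : ℝ} (hr : 0 < r)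
    (hf : DifferentiableOn ℂ f (Metric.closedBall c r)) (hw : w ∈ Metric.ball c (r / 2)) :
    ‖f w‖ ≤ ∫ θ in (0 : ℝ)..(2 * Real.pi), ‖f (circleMap c r θ)‖ := by
  have hfc : Continuous fun θ : ℝ => f (circleMap c r θ) :=
    hf.continuousOn.comp_continuous (continuous_circleMap c r)
      fun θ => circleMap_mem_closedBall c hr.le θ
  have hdist : ∀ θ, r / 2 ≤ ‖circleMap c r θ - w‖ := fun θ => by
    have hr' : ‖circleMap c r θ - c‖ = r := by simp [circleMap_sub_center, abs_of_pos hr]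
    have := norm_sub_le_norm_sub_add_norm_sub (circleMap c r θ) w c
    rw [Metric.mem_ball, dist_eq_norm] at hw
    linarith
  have hle : ‖∮ z in C(c, r), (z - w)⁻¹ • f z‖ ≤
      ∫ θ in (0 : ℝ)..(2 * Real.pi), 2 * ‖f (circleMap c r θ)‖ := by
    refine intervalIntegral.norm_integral_le_of_norm_le (by positivity)
      (Eventually.of_forall fun θ _ => ?_) ((hfc.norm.const_mul 2).intervalIntegrable _ _)
    have hpos : 0 < ‖circleMap c r θ - w‖ := (half_pos hr).trans_le (hdist θ)
    have hkernel : r * ‖circleMap c r θ - w‖⁻¹ ≤ 2 := by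
      rw [← div_eq_mul_inv, div_le_iff₀ hpos]
      linarith [hdist θ]
    simp only [norm_smul, norm_inv, deriv_circleMap, norm_mul, norm_circleMap_zero, abs_of_pos hr,
      norm_I, mul_one, ← mul_assoc]
    gcongr
  rw [hf.circleIntegral_sub_inv_smul (Metric.ball_subset_ball (by linarith) hw),
    intervalIntegral.integral_const_mul, norm_smul,
    show ‖(2 * Real.pi * I : ℂ)‖ = 2 * Real.pi by simp [abs_of_pos Real.pi_pos]] at hle
  nlinarith [Real.pi_gt_three, norm_nonneg (f w)]

/-- Mean square of `ζ - ∑_{n ≤ N} n⁻ˢ` over the circles of radius `r` centred at the points of `t`,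
all moved up by `βτ`. It controls the function on the concentric half-discs moved up by `βτ`. -/
noncomputable def tailEnergy (N : ℕ) (r : ℝ) (t : Finset ℂ) (β τ : ℝ) : ℝ :=
  ∑ c ∈ t, ∫ θ in (0 : ℝ)..(2 * Real.pi), ‖zetaTail N (circleMap c r θ + (β * τ : ℝ) * I)‖ ^ 2

theorem tailEnergy_nonneg (N : ℕ) (r : ℝ) (t : Finset ℂ) (β τ : ℝ) :
    0 ≤ tailEnergy N r t β τ :=
  Finset.sum_nonneg fun _ _ =>
    intervalIntegral.integral_nonneg (by positivity) fun _ _ => by positivity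

section TailEnergy

variable {r : ℝ} (hr : 0 < r)
include hr

theorem continuous_zetaTail_circleMap {c : ℂ} (hc : ∀ z ∈ Metric.closedBall c r, z.re < 1) (N : ℕ)
    (β : ℝ) : Continuous fun p : ℝ × ℝ => zetaTail N (circleMap c r p.2 + (β * p.1 : ℝ) * I) := by
  refine continuous_iff_continuousAt.mpr fun p => ?_
  have hne : circleMap c r p.2 + (β * p.1 : ℝ) * I ≠ 1 := fun h => by
    have hre := congrArg Complex.re h
    simp only [add_re, re_ofReal_mul, I_re, mul_zero, add_zero, one_re] at hre
    exact (hc _ (circleMap_mem_closedBall c hr.le p.2)).ne hre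
  exact ContinuousAt.comp (f := fun p : ℝ × ℝ => circleMap c r p.2 + (β * p.1 : ℝ) * I)
    (differentiableAt_zetaTail N hne).continuousAt (by fun_prop)

variable {t : Finset ℂ} (ht : ∀ c ∈ t, ∀ z ∈ Metric.closedBall c r, z.re < 1)
include ht

theorem continuous_tailEnergy (N : ℕ) (β : ℝ) : Continuous (tailEnergy N r t β) :=
  continuous_finsetSum _ fun _ hc =>
    intervalIntegral.continuous_parametric_intervalIntegral_of_continuous'
      ((continuous_zetaTail_circleMap hr (ht _ hc) N β).norm.pow 2) 0 (2 * Real.pi)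

theorem norm_zetaTail_sq_le_tailEnergy {s : ℂ} (hs : s ∈ ⋃ c ∈ t, Metric.ball c (r / 2)) (N : ℕ)
    (β τ : ℝ) : ‖zetaTail N (s + (β * τ : ℝ) * I)‖ ^ 2 ≤ tailEnergy N r t β τ := by
  obtain ⟨c, hct, hsc⟩ := Set.mem_iUnion₂.mp hs
  have hdiff : DifferentiableOn ℂ (fun z => zetaTail N (z + (β * τ : ℝ) * I) ^ 2)
      (Metric.closedBall c r) := fun z hz => by
    have hne : z + (β * τ : ℝ) * I ≠ 1 := fun h => by
      have hre := congrArg Complex.re h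
      simp only [add_re, re_ofReal_mul, I_re, mul_zero, add_zero, one_re] at hre
      exact (ht c hct z hz).ne hre
    exact (((differentiableAt_zetaTail N hne).comp z
      (by fun_prop : DifferentiableAt ℂ (fun z => z + (β * τ : ℝ) * I) z)).pow
        2).differentiableWithinAt
  have hcauchy := norm_le_integral_norm_circleMap hr hdiff hsc
  simp only [norm_pow] at hcauchy
  exact hcauchy.trans <| Finset.single_le_sum
    (f := fun c => ∫ θ in (0 : ℝ)..(2 * Real.pi),
      ‖zetaTail N (circleMap c r θ + (β * τ : ℝ) * I)‖ ^ 2)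
    (fun _ _ => intervalIntegral.integral_nonneg (by positivity) fun _ _ => by positivity) hct

theorem integral_mul_tailEnergy_le {F : ℝ → ℝ} (hF : Continuous F) {N : ℕ} {β T V : ℝ}
    (hV : ∀ c ∈ t, ∀ z ∈ Metric.closedBall c r,
      ∫ τ in (0 : ℝ)..T, F τ * ‖zetaTail N (z + (β * τ : ℝ) * I)‖ ^ 2 ≤ V) :
    ∫ τ in (0 : ℝ)..T, F τ * tailEnergy N r t β τ ≤ t.card * (2 * Real.pi * V) := by
  let f (c : ℂ) (τ θ : ℝ) : ℝ := F τ * ‖zetaTail N (circleMap c r θ + (β * τ : ℝ) * I)‖ ^ 2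
  have hf : ∀ c ∈ t, Continuous (Function.uncurry (f c)) := fun c hc =>
    (hF.comp continuous_fst).mul ((continuous_zetaTail_circleMap hr (ht c hc) N β).norm.pow 2)
  have hexpand : ∀ τ, F τ * tailEnergy N r t β τ =
      ∑ c ∈ t, ∫ θ in (0 : ℝ)..(2 * Real.pi), f c τ θ := fun τ => by
    simp only [f, tailEnergy, Finset.mul_sum, intervalIntegral.integral_const_mul]
  have hcircle : ∀ c ∈ t,
      ∫ τ in (0 : ℝ)..T, ∫ θ in (0 : ℝ)..(2 * Real.pi), f c τ θ ≤ 2 * Real.pi * V := fun c hc => by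
    have hint : IntegrableOn (Function.uncurry (f c))
        (Set.uIoc 0 T ×ˢ Set.uIoc 0 (2 * Real.pi)) (volume.prod volume) :=
      ((hf c hc).continuousOn.integrableOn_compact (isCompact_uIcc.prod isCompact_uIcc)).mono_set
        (Set.prod_mono Set.uIoc_subset_uIcc Set.uIoc_subset_uIcc)
    have hcont : Continuous fun θ => ∫ τ in (0 : ℝ)..T, f c τ θ :=
      intervalIntegral.continuous_parametric_intervalIntegral_of_continuous'
        (f := fun θ τ => f c τ θ) ((hf c hc).comp continuous_swap) 0 T
    calc ∫ τ in (0 : ℝ)..T, ∫ θ in (0 : ℝ)..(2 * Real.pi), f c τ θ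
        = ∫ θ in (0 : ℝ)..(2 * Real.pi), ∫ τ in (0 : ℝ)..T, f c τ θ :=
          intervalIntegral_intervalIntegral_swap hint
      _ ≤ ∫ _ in (0 : ℝ)..(2 * Real.pi), V :=
          intervalIntegral.integral_mono_on (by positivity) (hcont.intervalIntegrable _ _)
            intervalIntegrable_const fun θ _ => hV c hc _ (circleMap_mem_closedBall c hr.le θ)
      _ = 2 * Real.pi * V := by simp
  simp only [hexpand]
  rw [intervalIntegral.integral_finsetSum fun c hc =>
    (intervalIntegral.continuous_parametric_intervalIntegral_of_continuous'
      (hf c hc) 0 (2 * Real.pi)).intervalIntegrable _ _, ← nsmul_eq_mul]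
  exact Finset.sum_le_card_nsmul _ _ _ hcircle

end TailEnergy

theorem eventually_integral_mul_tailEnergy_le {α β : ℝ} (hα : α ≠ 0) (hirr : Irrational (β / α))
    {σ₁ σ₂ : ℝ} (h1 : 1 / 2 < σ₁) (h12 : σ₁ ≤ σ₂) (h2 : σ₂ < 1) {r B : ℝ} (hr : 0 < r)
    {t : Finset ℂ}
    (ht : ∀ c ∈ t, ∀ z ∈ Metric.closedBall c r, z.re ∈ Set.Icc σ₁ σ₂ ∧ |z.im| ≤ B) {ρ : ℝ}
    (hρ : 0 < ρ) :
    ∀ᶠ N : ℕ in atTop, ∀ (κ : ℝ) (F : ℝ → ℝ), IsPosLogPoly α κ F → (∀ u, 0 ≤ F u) →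
      (∀ u, F u ≤ 1) → Continuous F → ∀ ρ' > 0, ∀ᶠ T : ℝ in atTop,
        ∫ τ in (0 : ℝ)..T, F τ * tailEnergy N r t β τ ≤ ρ * (∫ τ in (0 : ℝ)..T, F τ) + ρ' * T := by
  have hcard : 0 < (t.card + 1) * (2 * Real.pi) := by positivity
  filter_upwards [eventually_integral_mul_norm_zetaTail_sq_le hα hirr h1 h12 h2 B
    (div_pos hρ hcard)] with N hN κ F hF hF0 hF1 hFc ρ' hρ'
  filter_upwards [hN κ F hF hF0 hF1 hFc _ (div_pos hρ' hcard), eventually_ge_atTop 0] with T hT hT0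
  have hI : 0 ≤ ∫ τ in (0 : ℝ)..T, F τ := intervalIntegral.integral_nonneg hT0 fun u _ => hF0 u
  set V := ρ / ((t.card + 1) * (2 * Real.pi)) * (∫ τ in (0 : ℝ)..T, F τ) +
    ρ' / ((t.card + 1) * (2 * Real.pi)) * T with hV
  have hV0 : 0 ≤ V := by positivity
  calc ∫ τ in (0 : ℝ)..T, F τ * tailEnergy N r t β τ
      ≤ t.card * (2 * Real.pi * V) :=
        integral_mul_tailEnergy_le hr (fun c hc z hz => (ht c hc z hz).1.2.trans_lt h2) hFc
          fun c hc z hz => hT z (ht c hc z hz).1 (ht c hc z hz).2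
    _ ≤ (t.card + 1) * (2 * Real.pi * V) := by gcongr; linarith
    _ = ρ * (∫ τ in (0 : ℝ)..T, F τ) + ρ' * T := by rw [hV]; field_simp

/-! ### Positive lower density -/

theorem toReal_volume_inter_Icc_mono {A B : Set ℝ} (h : A ⊆ B) (T : ℝ) :
    (volume (A ∩ Set.Icc 0 T)).toReal ≤ (volume (B ∩ Set.Icc 0 T)).toReal :=
  measureReal_mono (Set.inter_subset_inter_left _ h)
    (measure_ne_top_of_subset Set.inter_subset_right (by simp))

theorem integral_le_toReal_volume_add {A : Set ℝ} (hA : MeasurableSet A) {F H : ℝ → ℝ}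
    (hF : Continuous F) (hH : Continuous H) (hF1 : ∀ u, F u ≤ 1) (hH0 : ∀ u, 0 ≤ H u) {q : ℝ}
    (hq : 0 ≤ q) (h : ∀ u ∉ A, F u ≤ q + H u) {T : ℝ} (hT : 0 ≤ T) :
    ∫ u in (0 : ℝ)..T, F u ≤
      (volume (A ∩ Set.Icc 0 T)).toReal + q * T + ∫ u in (0 : ℝ)..T, H u := by
  have hind : IntervalIntegrable (A.indicator fun _ => (1 : ℝ)) volume 0 T :=
    intervalIntegrable_iff.mpr ((integrableOn_const (by simp)).indicator hA)
  have hindle : ∫ u in (0 : ℝ)..T, A.indicator (fun _ => (1 : ℝ)) u ≤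
      (volume (A ∩ Set.Icc 0 T)).toReal := by
    rw [intervalIntegral.integral_of_le hT, integral_indicator hA, setIntegral_const, smul_eq_mul,
      mul_one, measureReal_restrict_apply hA]
    exact measureReal_mono (Set.inter_subset_inter_right _ Set.Ioc_subset_Icc_self)
      (measure_ne_top_of_subset Set.inter_subset_right (by simp))
  have hpt : ∀ u ∈ Set.Icc 0 T, F u ≤ A.indicator (fun _ => (1 : ℝ)) u + q + H u := fun u _ => by
    by_cases hu : u ∈ A
    · rw [Set.indicator_of_mem hu]
      linarith [hF1 u, hH0 u]
    · rw [Set.indicator_of_notMem hu]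
      linarith [h u hu]
  have hq' : IntervalIntegrable (fun _ => q) volume 0 T := intervalIntegrable_const
  calc ∫ u in (0 : ℝ)..T, F u
      ≤ ∫ u in (0 : ℝ)..T, (A.indicator (fun _ => (1 : ℝ)) u + q + H u) :=
        intervalIntegral.integral_mono_on hT (hF.intervalIntegrable _ _)
          ((hind.add hq').add (hH.intervalIntegrable 0 T)) hpt
    _ = (∫ u in (0 : ℝ)..T, A.indicator (fun _ => (1 : ℝ)) u) + q * T + ∫ u in (0 : ℝ)..T, H u := by
        rw [intervalIntegral.integral_add (hind.add hq') (hH.intervalIntegrable 0 T),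
          intervalIntegral.integral_add hind hq', intervalIntegral.integral_const, sub_zero,
          smul_eq_mul, mul_comm T]
    _ ≤ _ := by gcongr

theorem norm_sum_cpow_sub_sum_cpow_le {d : ℝ} {N : ℕ} {s : ℂ} (hs : 0 ≤ s.re) {τ δ : ℝ}
    (h : ∀ n ∈ Finset.Icc 1 N, ‖cexp (I * ((d - 1) * Real.log n * τ : ℝ)) - 1‖ ≤ δ) :
    ‖∑ n ∈ Finset.Icc 1 N, (n : ℂ) ^ (-(s + (d * τ : ℝ) * I)) -
      ∑ n ∈ Finset.Icc 1 N, (n : ℂ) ^ (-(s + (1 * τ : ℝ) * I))‖ ≤ N * δ := by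
  have hterm : ∀ n ∈ Finset.Icc 1 N,
      ‖(n : ℂ) ^ (-(s + (d * τ : ℝ) * I)) - (n : ℂ) ^ (-(s + (1 * τ : ℝ) * I))‖ ≤ δ := by
    intro n hn
    have hn1 : 1 ≤ n := (Finset.mem_Icc.mp hn).1
    have hn0 : n ≠ 0 := by lia
    have hphase : cexp (I * (-(1 * Real.log n) : ℝ) * τ) =
        cexp (I * (-(d * Real.log n) : ℝ) * τ) * cexp (I * ((d - 1) * Real.log n * τ : ℝ)) := by
      rw [← Complex.exp_add]
      push_cast
      ring_nf
    have hunit : ‖cexp (I * (-(d * Real.log n) : ℝ) * τ)‖ = 1 := by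
      rw [mul_assoc, ← ofReal_mul, norm_exp_I_mul_ofReal]
    rw [natCast_cpow_neg_add_mul_I hn0, natCast_cpow_neg_add_mul_I hn0, hphase, ← mul_sub,
      ← mul_one_sub, norm_mul, norm_mul, hunit, one_mul, norm_sub_rev 1,
      norm_natCast_cpow_of_pos hn1, neg_re]
    exact (mul_le_of_le_one_left (norm_nonneg _)
      (Real.rpow_le_one_of_one_le_of_nonpos (by exact_mod_cast hn1) (by linarith))).trans (h n hn)
  rw [← Finset.sum_sub_distrib]
  calc _ ≤ ∑ _ ∈ Finset.Icc 1 N, δ := norm_sum_le_of_le _ hterm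
    _ = N * δ := by simp

theorem exists_pow_le_inv_two_mul_pow_div (N : ℕ) {q c : ℝ} (hq0 : 0 ≤ q) (hq1 : q < 1)
    (hc : 0 < c) : ∃ M : ℕ, M ≠ 0 ∧ q ^ M ≤ (1 / (2 * (M : ℝ))) ^ N / c := by
  have hlim : Tendsto (fun M : ℕ => 2 ^ N * ((M : ℝ) ^ N * q ^ M)) atTop (nhds 0) := by
    simpa using (tendsto_pow_const_mul_const_pow_of_abs_lt_one N
      (by rwa [abs_of_nonneg hq0])).const_mul ((2 : ℝ) ^ N)
  obtain ⟨M, hM, hM0⟩ :=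
    ((hlim.eventually_lt_const (inv_pos.mpr hc)).and (eventually_ne_atTop 0)).exists
  refine ⟨M, hM0, ?_⟩
  calc q ^ M = (1 / (2 * (M : ℝ))) ^ N * (2 ^ N * (M ^ N * q ^ M)) := by
        rw [← mul_assoc (2 ^ N), ← mul_pow, ← mul_assoc, ← mul_pow,
          one_div_mul_cancel (by positivity), one_pow, one_mul]
    _ ≤ (1 / (2 * (M : ℝ))) ^ N * c⁻¹ := by gcongr
    _ = (1 / (2 * (M : ℝ))) ^ N / c := (div_eq_mul_inv _ _).symm

/-- The times `τ` at which the first `N` phases `n^{i(d-1)τ}` are `δ`-close to `1` and the tails of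
`ζ` around both `s + idτ` and `s + iτ` have small mean square over the circles of radius `r` about
the points of `t`. -/
def goodTimes (d : ℝ) (N : ℕ) (r : ℝ) (t : Finset ℂ) (δ η : ℝ) : Set ℝ :=
  {τ | (∀ n ∈ Finset.Icc 1 N, ‖cexp (I * ((d - 1) * Real.log n * τ : ℝ)) - 1‖ < δ) ∧
    tailEnergy N r t 1 τ < η ^ 2 ∧ tailEnergy N r t d τ < η ^ 2}

section GoodTimes

variable {r : ℝ} (hr : 0 < r) {t : Finset ℂ}
  (ht : ∀ c ∈ t, ∀ z ∈ Metric.closedBall c r, z.re < 1)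
include hr ht

theorem measurableSet_goodTimes (d : ℝ) (N : ℕ) (δ η : ℝ) :
    MeasurableSet (goodTimes d N r t δ η) := by
  have hphase : MeasurableSet {τ : ℝ | ∀ n ∈ Finset.Icc 1 N,
      ‖cexp (I * ((d - 1) * Real.log n * τ : ℝ)) - 1‖ < δ} := by
    simp only [Set.ofPred_forall]
    exact Finset.measurableSet_biInter _ fun n _ =>
      (isOpen_lt (by fun_prop) continuous_const).measurableSet
  have htail : ∀ β, MeasurableSet {τ | tailEnergy N r t β τ < η ^ 2} := fun β =>
    (isOpen_lt (continuous_tailEnergy hr ht N β) continuous_const).measurableSet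
  exact hphase.inter ((htail 1).inter (htail d))

theorem norm_riemannZeta_sub_le_of_mem_goodTimes {d : ℝ} {N : ℕ} {δ η : ℝ} (hη : 0 ≤ η) {s : ℂ}
    (hs : s ∈ ⋃ c ∈ t, Metric.ball c (r / 2)) (hs0 : 0 ≤ s.re) {τ : ℝ}
    (hτ : τ ∈ goodTimes d N r t δ η) :
    ‖riemannZeta (s + (d * τ : ℝ) * I) - riemannZeta (s + τ * I)‖ ≤ 2 * η + N * δ := by
  obtain ⟨hphase, h1, hd⟩ := hτ
  have hsum := norm_sum_cpow_sub_sum_cpow_le hs0 fun n hn => (hphase n hn).le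
  have htail : ∀ β, tailEnergy N r t β τ < η ^ 2 → ‖zetaTail N (s + (β * τ : ℝ) * I)‖ ≤ η :=
    fun β hβ => le_of_sq_le_sq ((norm_zetaTail_sq_le_tailEnergy hr ht hs N β τ).trans hβ.le) hη
  calc ‖riemannZeta (s + (d * τ : ℝ) * I) - riemannZeta (s + τ * I)‖
      = ‖zetaTail N (s + (d * τ : ℝ) * I) - zetaTail N (s + (1 * τ : ℝ) * I) +
          (∑ n ∈ Finset.Icc 1 N, (n : ℂ) ^ (-(s + (d * τ : ℝ) * I)) -
            ∑ n ∈ Finset.Icc 1 N, (n : ℂ) ^ (-(s + (1 * τ : ℝ) * I)))‖ := by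
        rw [zetaTail, zetaTail, one_mul]
        ring_nf
    _ ≤ η + η + N * δ := (norm_add_le _ _).trans <|
        add_le_add ((norm_sub_le _ _).trans (add_le_add (htail d hd) (htail 1 h1))) hsum
    _ = 2 * η + N * δ := by ring

theorem integral_logWeight_le {d : ℝ} {M N : ℕ} {δ η q : ℝ} (hδ : 0 ≤ δ) (hη : 0 < η) (hq0 : 0 ≤ q)
    (hq : (1 - δ ^ 2 / 4) ^ M ≤ q) {T : ℝ} (hT : 0 ≤ T) :
    ∫ τ in (0 : ℝ)..T, logWeight (d - 1) M N τ ≤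
      (volume (goodTimes d N r t δ η ∩ Set.Icc 0 T)).toReal + q * T +
        ((∫ τ in (0 : ℝ)..T, logWeight (d - 1) M N τ * tailEnergy N r t 1 τ) +
          ∫ τ in (0 : ℝ)..T, logWeight (d - 1) M N τ * tailEnergy N r t d τ) / η ^ 2 := by
  set W := logWeight (d - 1) M N
  have hW0 : ∀ τ, 0 ≤ W τ := logWeight_nonneg (d - 1) M N
  have hWc : Continuous W := continuous_logWeight (d - 1) M N
  have hWE : ∀ β, Continuous fun τ => W τ * tailEnergy N r t β τ := fun β =>
    hWc.mul (continuous_tailEnergy hr ht N β)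
  have hWE0 : ∀ β τ, 0 ≤ W τ * tailEnergy N r t β τ := fun β τ =>
    mul_nonneg (hW0 τ) (tailEnergy_nonneg N r t β τ)
  have hH0 : ∀ τ, 0 ≤ (W τ * tailEnergy N r t 1 τ + W τ * tailEnergy N r t d τ) / η ^ 2 :=
    fun τ => div_nonneg (add_nonneg (hWE0 1 τ) (hWE0 d τ)) (sq_nonneg η)
  rw [← intervalIntegral.integral_add ((hWE 1).intervalIntegrable _ _)
    ((hWE d).intervalIntegrable _ _), ← intervalIntegral.integral_div]
  refine integral_le_toReal_volume_add (measurableSet_goodTimes hr ht d N δ η) hWc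
    (H := fun τ => (W τ * tailEnergy N r t 1 τ + W τ * tailEnergy N r t d τ) / η ^ 2)
    (((hWE 1).add (hWE d)).div_const _) (logWeight_le_one (d - 1) M N) hH0 hq0 (fun τ hτ => ?_) hT
  by_cases hphase : ∀ n ∈ Finset.Icc 1 N, ‖cexp (I * ((d - 1) * Real.log n * τ : ℝ)) - 1‖ < δ
  · have htail : η ^ 2 ≤ tailEnergy N r t 1 τ + tailEnergy N r t d τ := by
      by_contra! hlt
      exact hτ ⟨hphase, by linarith [tailEnergy_nonneg N r t d τ],
        by linarith [tailEnergy_nonneg N r t 1 τ]⟩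
    have hchebyshev : W τ ≤ (W τ * tailEnergy N r t 1 τ + W τ * tailEnergy N r t d τ) / η ^ 2 := by
      rw [le_div_iff₀ (by positivity), ← mul_add]
      exact mul_le_mul_of_nonneg_left htail (hW0 τ)
    linarith
  · push Not at hphase
    obtain ⟨n, hn, hδn⟩ := hphase
    linarith [logWeight_le_of_le_norm hn hδ hδn M, hH0 τ]

end GoodTimes

theorem exists_finset_half_ball_cover {K : Set ℂ} (hK : IsCompact K) (hKD : K ⊆ strip) :
    ∃ r > 0, ∃ t : Finset ℂ, ∃ σ₁ σ₂ B : ℝ, 1 / 2 < σ₁ ∧ σ₁ ≤ σ₂ ∧ σ₂ < 1 ∧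
      (∀ c ∈ t, ∀ z ∈ Metric.closedBall c r, z.re ∈ Set.Icc σ₁ σ₂ ∧ |z.im| ≤ B) ∧
      K ⊆ ⋃ c ∈ t, Metric.ball c (r / 2) := by
  rcases K.eq_empty_or_nonempty with rfl | hne
  · exact ⟨1, one_pos, ∅, 3 / 4, 3 / 4, 0, by norm_num, le_rfl, by norm_num, by simp, by simp⟩
  have hopen : IsOpen strip :=
    (isOpen_lt continuous_const continuous_re).inter (isOpen_lt continuous_re continuous_const)
  obtain ⟨r, hr, hrD⟩ := hK.exists_cthickening_subset_open hopen hKD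
  have hcpt : IsCompact (Metric.cthickening r K) := hK.cthickening
  have hne' : (Metric.cthickening r K).Nonempty := hne.mono (Metric.self_subset_cthickening K)
  obtain ⟨z₁, hz₁, hmin⟩ := hcpt.exists_isMinOn hne' continuous_re.continuousOn
  obtain ⟨z₂, hz₂, hmax⟩ := hcpt.exists_isMaxOn hne' continuous_re.continuousOn
  obtain ⟨z₃, -, him⟩ := hcpt.exists_isMaxOn hne' continuous_im.abs.continuousOn
  obtain ⟨t, htK, htf, hcover⟩ := hK.finite_cover_balls (half_pos hr)
  refine ⟨r, hr, htf.toFinset, z₁.re, z₂.re, |z₃.im|, (hrD hz₁).1, hmin hz₂, (hrD hz₂).2,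
    fun c hc z hz => ?_, by simpa using hcover⟩
  have hzK := Metric.closedBall_subset_cthickening (htK (htf.mem_toFinset.mp hc)) r hz
  exact ⟨⟨hmin hzK, hmax hzK⟩, him hzK⟩

theorem exists_eventually_mul_le_volume_goodTimes {d : ℝ} (hd : Irrational d) {σ₁ σ₂ : ℝ}
    (h1 : 1 / 2 < σ₁) (h12 : σ₁ ≤ σ₂) (h2 : σ₂ < 1) {r B : ℝ} (hr : 0 < r) {t : Finset ℂ}
    (ht : ∀ c ∈ t, ∀ z ∈ Metric.closedBall c r, z.re ∈ Set.Icc σ₁ σ₂ ∧ |z.im| ≤ B) {η : ℝ}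
    (hη : 0 < η) :
    ∃ N : ℕ, ∀ δ > 0, δ ≤ 1 → ∃ κ > 0, ∀ᶠ T : ℝ in atTop,
      κ * T ≤ (volume (goodTimes d N r t δ η ∩ Set.Icc 0 T)).toReal := by
  have hα : Irrational (d - 1) := by simpa using hd.sub_intCast 1
  have hirr1 : Irrational (1 / (d - 1)) := by simpa using hα.inv
  have hirrd : Irrational (d / (d - 1)) := by
    have : d / (d - 1) = 1 / (d - 1) + (1 : ℤ) := by
      have := hα.ne_zero
      push_cast
      field_simp
      ring
    exact this ▸ hirr1.add_intCast 1
  have hρ : 0 < η ^ 2 / 8 := by positivity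
  obtain ⟨N, hN1, hNd⟩ :=
    ((eventually_integral_mul_tailEnergy_le hα.ne_zero hirr1 h1 h12 h2 hr ht hρ).and
      (eventually_integral_mul_tailEnergy_le hα.ne_zero hirrd h1 h12 h2 hr ht hρ)).exists
  refine ⟨N, fun δ hδ hδ1 => ?_⟩
  obtain ⟨M, hM0, hM⟩ := exists_pow_le_inv_two_mul_pow_div N (q := 1 - δ ^ 2 / 4)
    (by nlinarith) (by nlinarith [sq_pos_of_pos hδ]) (show (0 : ℝ) < 8 by norm_num)
  set κ : ℝ := (1 / (2 * M)) ^ N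
  have hκ : 0 < κ := by positivity
  have hW : IsPosLogPoly (d - 1) κ (logWeight (d - 1) M N) := isPosLogPoly_logWeight _ hM0 N
  have hW0 := logWeight_nonneg (d - 1) M N
  have hW1 := logWeight_le_one (d - 1) M N
  have hWc := continuous_logWeight (d - 1) M N
  refine ⟨κ / 4, by positivity, ?_⟩
  filter_upwards [hN1 κ _ hW hW0 hW1 hWc (κ * η ^ 2 / 16) (by positivity),
    hNd κ _ hW hW0 hW1 hWc (κ * η ^ 2 / 16) (by positivity),
    hW.eventually_mul_le_integral hα.ne_zero (show 2 / 3 * κ < κ by linarith),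
    eventually_ge_atTop 0] with T hT1 hTd hmean hT
  have hmain := integral_logWeight_le hr (fun c hc z hz => (ht c hc z hz).1.2.trans_lt h2) hδ.le hη
    (by positivity) hM hT (d := d) (N := N)
  have htail := div_le_div_of_nonneg_right (add_le_add hT1 hTd) (sq_nonneg η)
  field_simp at hmain htail
  nlinarith

theorem exists_eventually_mul_le_volume {d : ℝ} (hd : Irrational d) {K : Set ℂ} (hK : IsCompact K)
    (hKD : K ⊆ strip) {ε : ℝ} (hε : 0 < ε) :
    ∃ κ > 0, ∀ᶠ T : ℝ in atTop, κ * T ≤ (volume ({τ : ℝ | ∀ s ∈ K,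
      ‖riemannZeta (s + (d * τ : ℝ) * I) - riemannZeta (s + τ * I)‖ ≤ ε} ∩
        Set.Icc 0 T)).toReal := by
  obtain ⟨r, hr, t, σ₁, σ₂, B, h1, h12, h2, ht, hcover⟩ := exists_finset_half_ball_cover hK hKD
  obtain ⟨N, hN⟩ :=
    exists_eventually_mul_le_volume_goodTimes hd h1 h12 h2 hr ht (show 0 < ε / 4 by positivity)
  obtain ⟨κ, hκ, hT⟩ := hN (min 1 (ε / (2 * (N + 1)))) (by positivity) (min_le_left _ _)
  have hδ : N * min 1 (ε / (2 * (N + 1))) ≤ ε / 2 := by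
    calc N * min 1 (ε / (2 * (N + 1))) ≤ (N + 1) * (ε / (2 * (N + 1))) := by
          gcongr
          · linarith
          · exact min_le_right _ _
      _ = ε / 2 := by field_simp
  have hgood : goodTimes d N r t (min 1 (ε / (2 * (N + 1)))) (ε / 4) ⊆ {τ : ℝ | ∀ s ∈ K,
      ‖riemannZeta (s + (d * τ : ℝ) * I) - riemannZeta (s + τ * I)‖ ≤ ε} := fun τ hτ => by
    rw [Set.mem_ofPred_eq]
    intro s hs
    have := norm_riemannZeta_sub_le_of_mem_goodTimes hr
      (fun c hc z hz => (ht c hc z hz).1.2.trans_lt h2) (by positivity) (hcover hs)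
      (by linarith [(hKD hs).1]) hτ
    linarith
  exact ⟨κ, hκ, hT.mono fun T hT => hT.trans (toReal_volume_inter_Icc_mono hgood T)⟩

theorem lowerDens_pos {S : Set ℝ} {κ : ℝ} (hκ : 0 < κ)
    (h : ∀ᶠ T : ℝ in atTop, κ * T ≤ (volume (S ∩ Set.Icc 0 T)).toReal) : 0 < lowerDens S := by
  have hle : ∀ᶠ T : ℝ in atTop, (volume (S ∩ Set.Icc 0 T)).toReal / T ≤ 1 := by
    filter_upwards [eventually_gt_atTop 0] with T hT
    rw [div_le_one hT]
    simpa [hT.le] using toReal_volume_inter_Icc_mono (Set.subset_univ S) T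
  refine hκ.trans_le <|
    le_liminf_of_le (IsBoundedUnder.isCoboundedUnder_ge ⟨1, by simpa using hle⟩) ?_
  filter_upwards [h, eventually_gt_atTop 0] with T hT hT0
  rwa [le_div_iff₀ hT0]

theorem supNorm_lt_ofReal {K : Set ℂ} {f : ℂ → ℂ} {a b : ℝ} (hb : 0 < b) (hab : a < b)
    (h : ∀ s ∈ K, ‖f s‖ ≤ a) : supNorm K f < ENNReal.ofReal b := by
  refine (iSup₂_le fun s hs => ?_).trans_lt ((ENNReal.ofReal_lt_ofReal_iff hb).mpr hab)
  rw [← enorm_eq_nnnorm, ← ofReal_norm]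
  exact ENNReal.ofReal_le_ofReal (h s hs)

theorem self_approx_zeta_irrational_general (d : ℝ) (hd : Irrational d)
    (K : Set ℂ) (hK : IsCompact K) (hKD : K ⊆ strip) (ε : ℝ) (hε : 0 < ε) :
    0 < lowerDens {τ : ℝ |
      supNorm K (fun s => riemannZeta (s + (d * τ : ℝ) * Complex.I)
        - riemannZeta (s + τ * Complex.I)) < ENNReal.ofReal ε} := by
  obtain ⟨κ, hκ, hT⟩ := exists_eventually_mul_le_volume hd hK hKD (half_pos hε)
  exact lowerDens_pos hκ <| hT.mono fun T hT => hT.trans <|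
    toReal_volume_inter_Icc_mono (fun τ hτ => supNorm_lt_ofReal hε (half_lt_self hε) hτ) T

theorem self_approx_zeta_irrational (d : ℝ) (hd : Irrational d)
    (K : Set ℂ) (hK : IsCompact K) (hKD : K ⊆ strip) (hKc : IsConnected Kᶜ)
    (ε : ℝ) (hε : 0 < ε) :
    0 < lowerDens {τ : ℝ |
      supNorm K (fun s => riemannZeta (s + (d * τ : ℝ) * Complex.I)
        - riemannZeta (s + τ * Complex.I)) < ENNReal.ofReal ε} :=
  self_approx_zeta_irrational_general d hd K hK hKD ε hε
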